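/- Let 0 ≤ q ≤ 1, η > 0, θ ≥ 0, τ ≥ 0 and 0 < s ≤ t. Let μ_s be a probability measure on ℝ with finite moments of all orders such that ∫ p̄_m(y;s) p̄_n(y;s) μ_s(dy) = 0 whenever m ≠ n. Then for every x in the topological support of μ_s (i.e. every open neighborhood of x has positive μ_s-measure) there exists a unique probability measure ν_x on ℝ with finite moments of all orders such that p̄_n(x;s) = ∫ p̄_n(y;t) ν_x(dy) for all n ≥ 0. -/

import Mathlib

/-- `[n]_q = 1 + q + ⋯ + q^{n-1}`. -/
noncomputable def qnum (q : ℝ) (n : ℕ) : ℝ := ∑ i ∈ Finset.range n, q ^ i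

/-- `[n]_q! = [1]_q [2]_q ⋯ [n]_q`. -/
noncomputable def qfact (q : ℝ) (n : ℕ) : ℝ := ∏ i ∈ Finset.range n, qnum q (i + 1)

/-- q-binomial coefficient `[n choose k]_q`, with the convention that it is `0` for `k > n`. -/
noncomputable def qbinom (q : ℝ) (n k : ℕ) : ℝ :=
  if k ≤ n then qfact q n / (qfact q (n - k) * qfact q k) else 0

/-- `a_n = η⁻¹ + θ[n]_q + [n]_q² ητ`. -/
noncomputable def aCoef (η θ τ q : ℝ) (n : ℕ) : ℝ :=
  η⁻¹ + θ * qnum q n + (qnum q n) ^ 2 * η * τ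

/-- `b_n(t) = (tη + θ + ([n]_q + [n-1]_q)ητ)[n]_q`. -/
noncomputable def bCoef (η θ τ q t : ℝ) (n : ℕ) : ℝ :=
  (t * η + θ + (qnum q n + qnum q (n - 1)) * η * τ) * qnum q n

/-- `c_n(t) = η(t + τ[n-1]_q)[n]_q`. -/
noncomputable def cCoef (η τ q t : ℝ) (n : ℕ) : ℝ :=
  η * (t + τ * qnum q (n - 1)) * qnum q n

/-- `A_n(x,s) = a_n + q^n x - sη q^n [n]_q`. -/
noncomputable def ACoef (η θ τ q x s : ℝ) (n : ℕ) : ℝ :=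
  aCoef η θ τ q n + q ^ n * x - s * η * q ^ n * qnum q n

/-- `x_k(s) = ((sη q^k - θ)[k]_q - η⁻¹ - ητ[k]_q²)/q^k`, the zero of `x ↦ A_k(x,s)`. -/
noncomputable def xPt (η θ τ q s : ℝ) (k : ℕ) : ℝ :=
  ((s * η * q ^ k - θ) * qnum q k - η⁻¹ - η * τ * (qnum q k) ^ 2) / q ^ k

open MeasureTheory

section Helpers

open ProbabilityTheory Filter Topology Polynomial

lemma exp_moment_det (κ₁ κ₂ : Measure ℝ) [IsFiniteMeasure κ₁] [IsFiniteMeasure κ₂]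
    (ε : ℝ) (hε : 0 < ε)
    (h₁ : ∀ t : ℝ, |t| < ε → Integrable (fun u => Real.exp (t * u)) κ₁)
    (h₂ : ∀ t : ℝ, |t| < ε → Integrable (fun u => Real.exp (t * u)) κ₂)
    (hm : ∀ n : ℕ, ∫ u, u ^ n ∂κ₁ = ∫ u, u ^ n ∂κ₂) : κ₁ = κ₂ := by
  have key : ∀ κ : Measure ℝ, (∀ t : ℝ, |t| < ε → Integrable (fun u => Real.exp (t * u)) κ) →
      ∀ t : ℝ, |t| < ε → t ∈ interior (integrableExpSet id κ) := by
    intro κ h t ht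
    rw [mem_interior]
    refine ⟨Set.Ioo (-ε) ε, ?_, isOpen_Ioo, abs_lt.mp ht⟩
    intro u hu
    exact h u (abs_lt.mpr hu)
  have k1 := key κ₁ h₁
  have k2 := key κ₂ h₂
  let U : Set ℂ := {z | z.re ∈ Set.Ioo (-ε) ε}
  have hU : IsPreconnected U := by
    have : Convex ℝ U := (convex_Ioo (-ε) ε).linear_preimage Complex.reLm
    exact this.isPreconnected
  have a1 : AnalyticOnNhd ℂ (complexMGF id κ₁) U := fun z hz =>
    analyticAt_complexMGF (k1 _ (abs_lt.mpr hz))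
  have a2 : AnalyticOnNhd ℂ (complexMGF id κ₂) U := fun z hz =>
    analyticAt_complexMGF (k2 _ (abs_lt.mpr hz))
  have h0 : (0 : ℂ) ∈ U := by simp [U, hε]
  have hd : AnalyticAt ℂ (complexMGF id κ₁ - complexMGF id κ₂) 0 := (a1 0 h0).sub (a2 0 h0)
  have hev : complexMGF id κ₁ =ᶠ[𝓝 0] complexMGF id κ₂ := by
    have htop : analyticOrderAt (complexMGF id κ₁ - complexMGF id κ₂) 0 = ⊤ := by
      rw [ENat.eq_top_iff_forall_ge]
      intro m
      rw [natCast_le_analyticOrderAt_iff_iteratedDeriv_eq_zero hd]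
      intro i _
      rw [iteratedDeriv_sub (a1 0 h0).contDiffAt (a2 0 h0).contDiffAt,
        iteratedDeriv_complexMGF (k1 _ (by simpa using hε)),
        iteratedDeriv_complexMGF (k2 _ (by simpa using hε))]
      simp only [id, zero_mul, Complex.exp_zero, mul_one]
      have := hm i
      have h3 : ∀ κ : Measure ℝ, ∫ u : ℝ, (u : ℂ) ^ i ∂κ = ((∫ u, u ^ i ∂κ : ℝ) : ℂ) := by
        intro κ
        rw [← integral_complex_ofReal]; simp
      rw [h3, h3, this, sub_self]
    rw [analyticOrderAt_eq_top] at htop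
    filter_upwards [htop] with z hz
    exact sub_eq_zero.mp hz
  have heq := a1.eqOn_of_preconnected_of_eventuallyEq a2 hU h0 hev
  apply Measure.ext_of_charFun
  funext t
  rw [← complexMGF_id_mul_I, ← complexMGF_id_mul_I]
  exact heq (by simp [U, hε])

/-- half-line support together with a square-root exponential moment -/
def HardyM (c : ℝ) (σ : Measure ℝ) : Prop :=
  (∀ᵐ x ∂σ, -c ≤ x) ∧ ∃ ε : ℝ, 0 < ε ∧ Integrable (fun x => Real.exp (ε * √(x + c))) σ

lemma HardyM.mono_eps {σ : Measure ℝ} {c ε δ : ℝ} (hδ : δ ≤ ε)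
    (h : Integrable (fun x => Real.exp (ε * √(x + c))) σ) :
    Integrable (fun x => Real.exp (δ * √(x + c))) σ := by
  refine h.mono' (by fun_prop) (Eventually.of_forall fun x => ?_)
  rw [Real.norm_eq_abs, abs_of_pos (Real.exp_pos _)]
  apply Real.exp_le_exp.mpr
  gcongr

lemma stieltjes_det (c : ℝ) (κ₁ κ₂ : Measure ℝ) [IsFiniteMeasure κ₁] [IsFiniteMeasure κ₂]
    (h₁ : HardyM c κ₁) (h₂ : HardyM c κ₂)
    (hm : ∀ p : ℝ[X], ∫ x, p.eval x ∂κ₁ = ∫ x, p.eval x ∂κ₂) : κ₁ = κ₂ := by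
  obtain ⟨s1, e1, he1, i1⟩ := h₁
  obtain ⟨s2, e2, he2, i2⟩ := h₂
  set ε := min e1 e2 with hεd
  have hε : 0 < ε := lt_min he1 he2
  replace i1 := HardyM.mono_eps (min_le_left e1 e2) i1
  replace i2 := HardyM.mono_eps (min_le_right e1 e2) i2
  rw [← hεd] at i1 i2
  let f : ℝ → ℝ := fun x => √(x + c)
  let g : ℝ → ℝ := fun x => -√(x + c)
  have hf : Measurable f := by fun_prop
  have hg : Measurable g := by fun_prop
  let S : Measure ℝ → Measure ℝ := fun κ => κ.map f + κ.map g
  have hexp : ∀ κ : Measure ℝ, Integrable (fun x => Real.exp (ε * √(x + c))) κ → ∀ t : ℝ, |t| < ε →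
      Integrable (fun u => Real.exp (t * u)) (S κ) := by
    intro κ hi t ht
    have ht' := abs_lt.mp ht
    refine Integrable.add_measure ?_ ?_
    · rw [integrable_map_measure (by fun_prop) hf.aemeasurable]
      exact HardyM.mono_eps ht'.2.le hi
    · rw [integrable_map_measure (by fun_prop) hg.aemeasurable]
      have := HardyM.mono_eps (δ := -t) (by linarith) hi
      refine this.congr (Eventually.of_forall fun x => ?_)
      simp [g]
  have hintg : ∀ κ : Measure ℝ, IsFiniteMeasure κ → Integrable (fun x => Real.exp (ε * √(x + c))) κ →
      ∀ n : ℕ, Integrable (fun x => (√(x + c)) ^ n) κ := by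
    intro κ _ hi n
    refine (hi.const_mul (n.factorial / ε ^ n)).mono' (by fun_prop) (Eventually.of_forall fun x => ?_)
    have h0 : 0 ≤ √(x + c) := Real.sqrt_nonneg _
    rw [Real.norm_eq_abs, abs_of_nonneg (by positivity)]
    have := Real.pow_div_factorial_le_exp (ε * √(x + c)) (by positivity) n
    rw [mul_pow, div_le_iff₀ (by positivity)] at this
    rw [div_mul_eq_mul_div, le_div_iff₀ (by positivity)]
    linarith
  have hmom : ∀ κ : Measure ℝ, IsFiniteMeasure κ → (∀ᵐ x ∂κ, -c ≤ x) →
      Integrable (fun x => Real.exp (ε * √(x + c))) κ → ∀ n : ℕ,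
      ∫ u, u ^ n ∂(S κ) = (1 + (-1) ^ n) * ∫ x, √(x + c) ^ n ∂κ := by
    intro κ hκ _ hi n
    have a := hintg κ hκ hi n
    have b : Integrable (fun x => g x ^ n) κ := by
      have := a.const_mul ((-1) ^ n)
      refine this.congr (Eventually.of_forall fun x => ?_)
      simp [g, ← mul_pow]
    rw [integral_add_measure, integral_map hf.aemeasurable (by fun_prop),
      integral_map hg.aemeasurable (by fun_prop), add_mul, one_mul, ← integral_const_mul]
    · congr 2
      ext x
      simp [g, ← mul_pow]
    · rw [integrable_map_measure (by fun_prop) hf.aemeasurable]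
      exact a
    · rw [integrable_map_measure (by fun_prop) hg.aemeasurable]
      exact b
  have heven : ∀ κ : Measure ℝ, (∀ᵐ x ∂κ, -c ≤ x) → ∀ n : ℕ,
      ∫ x, √(x + c) ^ (n + n) ∂κ = ∫ x, ((X + C c) ^ n : ℝ[X]).eval x ∂κ := by
    intro κ hs n
    apply integral_congr_ae
    filter_upwards [hs] with x hx
    simp only [eval_pow, eval_add, eval_X, eval_C]
    rw [← two_mul, pow_mul, Real.sq_sqrt (by linarith)]
  have hS : S κ₁ = S κ₂ := by
    refine exp_moment_det _ _ ε hε (hexp _ i1) (hexp _ i2) fun n => ?_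
    rw [hmom _ inferInstance s1 i1, hmom _ inferInstance s2 i2]
    rcases Nat.even_or_odd n with ⟨m, rfl⟩ | h
    · rw [heven _ s1, heven _ s2, hm]
    · rw [h.neg_one_pow]; simp
  have hback : ∀ κ : Measure ℝ, (∀ᵐ x ∂κ, -c ≤ x) →
      (S κ).map (fun u => u ^ 2 - c) = κ + κ := by
    intro κ hs
    rw [Measure.map_add _ _ (by fun_prop), Measure.map_map (by fun_prop) hf,
      Measure.map_map (by fun_prop) hg]
    have a : κ.map ((fun u => u ^ 2 - c) ∘ f) = κ := by
      rw [Measure.map_congr (g := id), Measure.map_id]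
      filter_upwards [hs] with x hx
      simp [f, Real.sq_sqrt (by linarith : 0 ≤ x + c)]
    have b : κ.map ((fun u => u ^ 2 - c) ∘ g) = κ := by
      rw [Measure.map_congr (g := id), Measure.map_id]
      filter_upwards [hs] with x hx
      simp [g, Real.sq_sqrt (by linarith : 0 ≤ x + c)]
    rw [a, b]
  have h2 : κ₁ + κ₁ = κ₂ + κ₂ := by rw [← hback _ s1, ← hback _ s2, hS]
  ext s hs
  have := congrArg (fun m => m s) h2
  simp only [Measure.add_apply] at this
  rw [← two_mul, ← two_mul] at this
  exact (ENNReal.mul_right_inj (by norm_num) (by norm_num)).mp this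

lemma HardyM.memLp_poly {c : ℝ} {σ : Measure ℝ} [IsFiniteMeasure σ] (h : HardyM c σ) (p : ℝ[X]) :
    Integrable (fun x => p.eval x) σ := by
  obtain ⟨hs, ε, hε, hi⟩ := h
  have h1 : ∀ n : ℕ, Integrable (fun x => (x + c) ^ n) σ := by
    intro n
    refine (hi.const_mul ((2 * n).factorial / ε ^ (2 * n))).mono' (by fun_prop) ?_
    filter_upwards [hs] with x hx
    have hx0 : 0 ≤ x + c := by linarith
    have h0 : 0 ≤ √(x + c) := Real.sqrt_nonneg _
    rw [Real.norm_eq_abs, abs_of_nonneg (by positivity)]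
    have := Real.pow_div_factorial_le_exp (ε * √(x + c)) (by positivity) (2 * n)
    rw [mul_pow, div_le_iff₀ (by positivity), pow_mul (√(x + c)), Real.sq_sqrt hx0] at this
    rw [div_mul_eq_mul_div, le_div_iff₀ (by positivity)]
    linarith
  have h2 : ∀ r : ℝ[X], Integrable (fun x => r.eval (x + c)) σ := by
    intro r
    simp only [eval_eq_sum_range]
    exact integrable_finsetSum _ fun i _ => (h1 i).const_mul _
  refine (h2 (p.comp (X - C c))).congr (Eventually.of_forall fun x => ?_)
  simp [eval_comp]

lemma HardyM.memLp_poly_two {c : ℝ} {σ : Measure ℝ} [IsFiniteMeasure σ] (h : HardyM c σ)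
    (p : ℝ[X]) : MemLp (fun x => p.eval x) 2 σ := by
  rw [memLp_two_iff_integrable_sq (by fun_prop)]
  refine (h.memLp_poly (p ^ 2)).congr (Eventually.of_forall fun x => ?_)
  simp

lemma HardyM.withDensity {c : ℝ} {σ : Measure ℝ} (h : HardyM c σ)
    {w : ℝ → ℝ} (hw : MemLp w 2 σ) (hw' : Measurable w) (hw0 : ∀ x, 0 ≤ w x) :
    HardyM c (σ.withDensity fun x => ENNReal.ofReal (w x)) := by
  obtain ⟨hs, ε, hε, hi⟩ := h
  refine ⟨(withDensity_absolutelyContinuous _ _).ae_le hs, ε / 2, by positivity, ?_⟩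
  rw [integrable_withDensity_iff_integrable_smul' (by fun_prop) (by simp)]
  have h2 : MemLp (fun x => Real.exp (ε / 2 * √(x + c))) 2 σ := by
    rw [memLp_two_iff_integrable_sq (by fun_prop)]
    refine hi.congr (Eventually.of_forall fun x => ?_)
    simp only [← Real.exp_nat_mul]
    congr 1; push_cast; ring
  refine (hw.integrable_mul h2).congr (Eventually.of_forall fun x => ?_)
  simp [ENNReal.toReal_ofReal (hw0 x)]

lemma integral_withDensity_ofReal {σ : Measure ℝ}
    {w : ℝ → ℝ} (hw' : Measurable w) (hw0 : ∀ x, 0 ≤ w x) (f : ℝ → ℝ) :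
    ∫ x, f x ∂(σ.withDensity fun x => ENNReal.ofReal (w x)) = ∫ x, w x * f x ∂σ := by
  rw [integral_withDensity_eq_integral_toReal_smul (by fun_prop) (by simp)]
  simp [ENNReal.toReal_ofReal (hw0 _)]

lemma poly_orth_zero {c : ℝ} {σ : Measure ℝ} [IsFiniteMeasure σ] (h : HardyM c σ)
    {f : ℝ → ℝ} (hf : MemLp f 2 σ) (hfm : Measurable f)
    (ho : ∀ p : ℝ[X], ∫ x, f x * p.eval x ∂σ = 0) : f =ᵐ[σ] 0 := by
  let w₁ : ℝ → ℝ := fun x => max (f x) 0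
  let w₂ : ℝ → ℝ := fun x => max (-f x) 0
  have m1 : Measurable w₁ := by fun_prop
  have m2 : Measurable w₂ := by fun_prop
  have p1 : ∀ x, 0 ≤ w₁ x := fun x => le_max_right _ _
  have p2 : ∀ x, 0 ≤ w₂ x := fun x => le_max_right _ _
  have l1 : MemLp w₁ 2 σ := hf.pos_part
  have l2 : MemLp w₂ 2 σ := hf.neg_part
  have i1 : Integrable w₁ σ := l1.integrable (by norm_num)
  have i2 : Integrable w₂ σ := l2.integrable (by norm_num)
  have := isFiniteMeasure_withDensity_ofReal i1.2
  have := isFiniteMeasure_withDensity_ofReal i2.2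
  have heq := stieltjes_det c _ _ (h.withDensity l1 m1 p1) (h.withDensity l2 m2 p2) (by
    intro p
    have j1 : Integrable (fun x => w₁ x * p.eval x) σ := l1.integrable_mul (h.memLp_poly_two p)
    have j2 : Integrable (fun x => w₂ x * p.eval x) σ := l2.integrable_mul (h.memLp_poly_two p)
    rw [integral_withDensity_ofReal m1 p1, integral_withDensity_ofReal m2 p2, ← sub_eq_zero,
      ← integral_sub j1 j2, ← ho p]
    congr 1
    ext x
    have : w₁ x - w₂ x = f x := max_zero_sub_max_neg_zero_eq_self (f x)
    rw [← sub_mul, this])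
  rw [withDensity_eq_iff (by fun_prop) (by fun_prop) (by
    exact ((lintegral_ofReal_le_lintegral_enorm w₁).trans_lt i1.2).ne)] at heq
  filter_upwards [heq] with x hx
  rw [ENNReal.ofReal_eq_ofReal_iff (p1 x) (p2 x)] at hx
  have : w₁ x - w₂ x = f x := max_zero_sub_max_neg_zero_eq_self (f x)
  simp [← this, hx]

lemma poly_dense {c : ℝ} {σ : Measure ℝ} [IsFiniteMeasure σ] (h : HardyM c σ)
    {g : ℝ → ℝ} (hg : MemLp g 2 σ) {δ : ℝ} (hδ : 0 < δ) :
    ∃ p : ℝ[X], ∫ x, (g x - p.eval x) ^ 2 ∂σ < δ := by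
  let T : ℝ[X] →ₗ[ℝ] Lp ℝ 2 σ :=
    { toFun := fun p => (h.memLp_poly_two p).toLp _
      map_add' := by
        intro p r
        rw [← MemLp.toLp_add]
        congr 1
        ext x; simp
      map_smul' := by
        intro a p
        rw [RingHom.id_apply, ← MemLp.toLp_const_smul]
        congr 1
        ext x; simp }
  have htop : T.range.topologicalClosure = ⊤ := by
    rw [Submodule.topologicalClosure_eq_top_iff, Submodule.eq_bot_iff]
    intro F hF
    rw [Submodule.mem_orthogonal'] at hF
    obtain ⟨f, hfm, hfe⟩ : ∃ f : ℝ → ℝ, Measurable f ∧ F =ᵐ[σ] f :=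
      ⟨_, (Lp.stronglyMeasurable F).measurable, ae_eq_refl _⟩
    have hz : f =ᵐ[σ] 0 := by
      refine poly_orth_zero h ((memLp_congr_ae hfe).mp (Lp.memLp F)) hfm fun p => ?_
      have := hF (T p) ⟨p, rfl⟩
      rw [L2.inner_def] at this
      rw [← this]
      apply integral_congr_ae
      filter_upwards [hfe, (h.memLp_poly_two p).coeFn_toLp] with x hx hx2
      have hx2' : (T p : ℝ → ℝ) x = p.eval x := hx2
      rw [hx2', hx]
      simp [mul_comm]
    rw [Lp.eq_zero_iff_ae_eq_zero]
    exact hfe.trans hz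
  have hmem : hg.toLp g ∈ T.range.topologicalClosure := by rw [htop]; trivial
  rw [← SetLike.mem_coe, Submodule.topologicalClosure_coe, Metric.mem_closure_iff] at hmem
  obtain ⟨_, ⟨p, rfl⟩, hp⟩ := hmem (√δ) (by positivity)
  refine ⟨p, ?_⟩
  rw [dist_eq_norm] at hp
  have h2 : ‖hg.toLp g - T p‖ ^ 2 < δ := by
    have := pow_lt_pow_left₀ hp (norm_nonneg _) (n := 2) (by norm_num)
    rwa [Real.sq_sqrt hδ.le] at this
  rw [← real_inner_self_eq_norm_sq, L2.inner_def] at h2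
  convert h2 using 1
  apply integral_congr_ae
  have : T p = (h.memLp_poly_two p).toLp _ := rfl
  filter_upwards [hg.coeFn_toLp, (h.memLp_poly_two p).coeFn_toLp, Lp.coeFn_sub (hg.toLp g) (T p)]
    with x h1 h2 h3
  rw [h3, Pi.sub_apply, h1, this, h2]
  simp [sq]

lemma poly_dense_weight {c : ℝ} {σ : Measure ℝ} [IsFiniteMeasure σ] (h : HardyM c σ)
    {g : ℝ → ℝ} (hgm : Measurable g) {B : ℝ} (hB : ∀ x, |g x| ≤ B) (V : ℝ[X])
    (hV : ∀ x, 0 ≤ V.eval x) {δ : ℝ} (hδ : 0 < δ) :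
    ∃ p : ℝ[X], ∫ x, V.eval x * (g x - p.eval x) ^ 2 ∂σ < δ := by
  have hm : Measurable fun x => V.eval x := by fun_prop
  have h' := h.withDensity (h.memLp_poly_two V) hm hV
  have := isFiniteMeasure_withDensity_ofReal (h.memLp_poly V).2
  have hg : MemLp g 2 (σ.withDensity fun x => ENNReal.ofReal (V.eval x)) :=
    MemLp.of_bound hgm.aestronglyMeasurable B (Eventually.of_forall hB)
  obtain ⟨p, hp⟩ := poly_dense h' hg hδ
  rw [integral_withDensity_ofReal hm hV] at hp
  exact ⟨p, hp⟩

lemma integrable_poly_of_mom {ρ : Measure ℝ} (hmom : ∀ n : ℕ, Integrable (fun y : ℝ => |y| ^ n) ρ)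
    (p : ℝ[X]) : Integrable (fun x => p.eval x) ρ := by
  simp only [eval_eq_sum_range]
  refine integrable_finsetSum _ fun i _ => Integrable.const_mul ?_ _
  refine (hmom i).mono' (by fun_prop) (Eventually.of_forall fun x => ?_)
  simp

lemma riesz_det {c : ℝ} {σ ρ : Measure ℝ} [IsFiniteMeasure σ] [IsFiniteMeasure ρ]
    (h : HardyM c σ) (hρ : ∀ n : ℕ, Integrable (fun y : ℝ => |y| ^ n) ρ)
    (hm : ∀ p : ℝ[X], ∫ x, p.eval x ∂ρ = ∫ x, p.eval x ∂σ) : ρ = σ := by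
  let A : StarSubalgebra ℝ (BoundedContinuousFunction ℝ ℝ) :=
    { carrier := {f | ∃ (k : ℕ) (P : ℝ[X]), ∀ x, f x * (1 + x ^ 2) ^ k = P.eval x}
      mul_mem' := by
        rintro f g ⟨k, P, hP⟩ ⟨l, R, hR⟩
        refine ⟨k + l, P * R, fun x => ?_⟩
        rw [eval_mul, ← hP, ← hR, BoundedContinuousFunction.mul_apply]
        ring
      add_mem' := by
        rintro f g ⟨k, P, hP⟩ ⟨l, R, hR⟩
        refine ⟨k + l, P * (1 + X ^ 2) ^ l + R * (1 + X ^ 2) ^ k, fun x => ?_⟩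
        rw [eval_add, eval_mul, eval_mul, ← hP, ← hR, BoundedContinuousFunction.add_apply]
        simp
        ring
      algebraMap_mem' := by
        intro r
        refine ⟨0, C r, fun x => ?_⟩
        simp
      star_mem' := by
        rintro f ⟨k, P, hP⟩
        exact ⟨k, P, fun x => by simpa using hP x⟩ }
  refine ext_of_forall_mem_subalgebra_integral_eq_of_polish (A := A) ?_ ?_
  · intro x y hxy
    have b1 : ∀ x : ℝ, ‖(1 + x ^ 2)⁻¹‖ ≤ 1 := by
      intro x
      rw [Real.norm_eq_abs, abs_of_pos (by positivity)]
      exact inv_le_one_of_one_le₀ (by nlinarith [sq_nonneg x])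
    have b2 : ∀ x : ℝ, ‖x * (1 + x ^ 2)⁻¹‖ ≤ 1 := by
      intro x
      rw [Real.norm_eq_abs, abs_mul, abs_of_pos (a := (1 + x ^ 2)⁻¹) (by positivity),
        ← div_eq_mul_inv, div_le_one (by positivity)]
      nlinarith [sq_nonneg (|x| - 1), sq_abs x]
    have hne : ∀ x : ℝ, 1 + x ^ 2 ≠ 0 := fun x => by positivity
    let u : BoundedContinuousFunction ℝ ℝ := BoundedContinuousFunction.ofNormedAddCommGroup
      (fun x : ℝ => (1 + x ^ 2)⁻¹) (by fun_prop (disch := exact hne _)) 1 b1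
    let v : BoundedContinuousFunction ℝ ℝ := BoundedContinuousFunction.ofNormedAddCommGroup
      (fun x : ℝ => x * (1 + x ^ 2)⁻¹) (by fun_prop (disch := exact hne _)) 1 b2
    have hu : u ∈ A := ⟨1, 1, fun x => by simp [u, hne]⟩
    have hv : v ∈ A := ⟨1, X, fun x => by simp [v, hne]⟩
    by_cases hx : u x = u y
    · refine ⟨_, ⟨_, ⟨v, hv, rfl⟩, rfl⟩, ?_⟩
      intro h2
      have h2' : x * (1 + x ^ 2)⁻¹ = y * (1 + y ^ 2)⁻¹ := h2
      have hx' : (1 + x ^ 2)⁻¹ = (1 + y ^ 2)⁻¹ := hx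
      rw [hx'] at h2'
      exact hxy (mul_right_cancel₀ (inv_ne_zero (hne y)) h2')
    · exact ⟨_, ⟨_, ⟨u, hu, rfl⟩, rfl⟩, hx⟩
  · rintro f ⟨k, P, hP⟩
    rw [← sub_eq_zero]
    apply eq_of_abs_sub_le_all
    intro δ hδ
    set M : ℝ := ρ.real Set.univ + σ.real Set.univ + 1 with hM
    have hMpos : 0 < M := by positivity
    let W : ℝ[X] := (1 + X ^ 2) ^ k
    have hW : ∀ x, 1 ≤ W.eval x := by
      intro x
      simp only [W, eval_pow, eval_add, eval_one, eval_X]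
      exact one_le_pow₀ (by nlinarith [sq_nonneg x])
    have hPW : ∀ x, f x * W.eval x = P.eval x := by
      intro x; rw [← hP]; simp [W]
    obtain ⟨p, hp⟩ := poly_dense_weight h f.continuous.measurable
      (fun x => f.norm_coe_le_norm x) (W ^ 2) (fun x => by simp; positivity)
      (δ := (δ / M) ^ 2) (by positivity)
    have hpP : ∫ x, ((P - W * p) ^ 2).eval x ∂σ < (δ / M) ^ 2 := by
      convert hp using 2
      ext x
      simp only [eval_pow, eval_sub, eval_mul, ← hPW]
      ring
    -- pointwise bound
    set a := δ / M with ha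
    have hapos : 0 < a := by positivity
    have hpt : ∀ x, |f x - p.eval x| ≤ (a ^ 2 + ((P - W * p) ^ 2).eval x) / (2 * a) := by
      intro x
      have e : ((P - W * p) ^ 2).eval x = (W.eval x) ^ 2 * (f x - p.eval x) ^ 2 := by
        simp only [eval_pow, eval_sub, eval_mul, ← hPW]
        ring
      rw [e, le_div_iff₀ (by positivity)]
      have h1 : (f x - p.eval x) ^ 2 ≤ (W.eval x) ^ 2 * (f x - p.eval x) ^ 2 :=
        le_mul_of_one_le_left (sq_nonneg _) (one_le_pow₀ (hW x))
      nlinarith [sq_nonneg (|f x - p.eval x| - a), sq_abs (f x - p.eval x)]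
    have hbound : ∀ κ : Measure ℝ, IsFiniteMeasure κ → (∀ r : ℝ[X], Integrable (fun x => r.eval x) κ) →
        |∫ x, f x ∂κ - ∫ x, p.eval x ∂κ| ≤
          (a ^ 2 * κ.real Set.univ + ∫ x, ((P - W * p) ^ 2).eval x ∂κ) / (2 * a) := by
      intro κ _ hi
      have hfi : Integrable (fun x => f x) κ := f.integrable κ
      rw [← integral_sub hfi (hi p)]
      refine (abs_integral_le_integral_abs).trans ?_
      refine (integral_mono ((hfi.sub (hi p)).abs)
        (((integrable_const (a ^ 2)).add (hi ((P - W * p) ^ 2))).div_const (2 * a)) hpt).trans ?_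
      simp only [Pi.add_apply]
      rw [integral_div, integral_add (integrable_const _) (hi _)]
      simp [mul_comm]
    have B1 := hbound ρ inferInstance (integrable_poly_of_mom hρ)
    have B2 := hbound σ inferInstance h.memLp_poly
    rw [hm, hm] at B1
    have hlt : ∀ m : ℝ, (a ^ 2 * m + ∫ x, ((P - W * p) ^ 2).eval x ∂σ) / (2 * a)
        ≤ (a * m + a) / 2 := by
      intro m
      rw [div_le_div_iff₀ (by positivity) (by positivity)]
      nlinarith
    have C1 := B1.trans (hlt _)
    have C2 := B2.trans (hlt _)
    have : |(∫ x, f x ∂ρ - ∫ x, f x ∂σ) - 0| ≤ δ := by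
      rw [sub_zero]
      have e : a * M = δ := by rw [ha]; field_simp
      have r1 : 0 ≤ ρ.real Set.univ := measureReal_nonneg
      have r2 : 0 ≤ σ.real Set.univ := measureReal_nonneg
      rw [abs_le] at C1 C2 ⊢
      constructor <;> nlinarith
    exact this

lemma limit_measure (ν : ℕ → ProbabilityMeasure ℝ) (M : ℕ → ℝ)
    (h0 : ∀ N, ∀ᵐ x ∂(ν N : Measure ℝ), 0 ≤ x)
    (hintg : ∀ N k, Integrable (fun x : ℝ => |x| ^ k) (ν N : Measure ℝ))
    (hM : ∀ N k, ∫ x, x ^ k ∂(ν N : Measure ℝ) ≤ M k) :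
    ∃ σ : Measure ℝ, IsProbabilityMeasure σ ∧ (∀ᵐ x ∂σ, 0 ≤ x) ∧
      (∀ k, Integrable (fun x : ℝ => |x| ^ k) σ) ∧ (∀ k, ∫ x, x ^ k ∂σ ≤ M k) ∧
      ∀ (p : ℝ[X]) (a : ℝ), (∀ᶠ N in atTop, ∫ x, p.eval x ∂(ν N : Measure ℝ) = a) →
        ∫ x, p.eval x ∂σ = a := by
  have habs : ∀ N k, ∫ x, |x| ^ k ∂(ν N : Measure ℝ) ≤ M k := by
    intro N k
    refine le_trans (le_of_eq ?_) (hM N k)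
    apply integral_congr_ae
    filter_upwards [h0 N] with x hx
    rw [abs_of_nonneg hx]
  have hM0 : ∀ k, 0 ≤ M k := fun k => le_trans (integral_nonneg fun x => by positivity) (habs 0 k)
  -- compactness
  let u : ℕ → NNReal := fun n => ⟨M 1 / (n + 1), by have := hM0 1; positivity⟩
  have hu : Tendsto u atTop (𝓝 0) := by
    rw [← NNReal.tendsto_coe]
    exact tendsto_const_nhds.div_atTop (tendsto_atTop_add_const_right _ _ tendsto_natCast_atTop_atTop)
  have hcomp := isCompact_setOfPred_probabilityMeasure_mass_eq_compl_isCompact_le (E := ℝ) hu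
    (K := fun n : ℕ => Metric.closedBall (0 : ℝ) (n + 1)) (fun n => isCompact_closedBall _ _)
    (Or.inl inferInstance)
  have hmem : ∀ N, ν N ∈ {μ : ProbabilityMeasure ℝ |
      ∀ n : ℕ, μ (Metric.closedBall (0 : ℝ) (n + 1))ᶜ ≤ u n} := by
    intro N n
    have h1 := mul_meas_ge_le_integral_of_nonneg (μ := (ν N : Measure ℝ)) (f := fun x : ℝ => |x| ^ 1)
      (Eventually.of_forall fun x => by positivity) (hintg N 1) (n + 1)
    have h2 : (ν N : Measure ℝ).real (Metric.closedBall (0 : ℝ) (n + 1))ᶜ ≤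
        (ν N : Measure ℝ).real {x | (n + 1 : ℝ) ≤ |x| ^ 1} := by
      refine measureReal_mono ?_ (measure_ne_top _ _)
      intro x hx
      simp only [Set.mem_compl_iff, Metric.mem_closedBall, dist_zero_right, Real.norm_eq_abs,
        not_le] at hx
      simpa using hx.le
    rw [← NNReal.coe_le_coe]
    change (ν N : Measure ℝ).real _ ≤ M 1 / (n + 1)
    rw [le_div_iff₀ (by positivity)]
    have := habs N 1
    nlinarith
  obtain ⟨σ, -, hσ⟩ := hcomp (f := map ν atTop) (by
    rw [le_principal_iff, mem_map]
    exact Filter.Eventually.of_forall hmem)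
  obtain ⟨U, hU, hUσ⟩ := mapClusterPt_iff_ultrafilter.mp hσ
  rw [ProbabilityMeasure.tendsto_iff_forall_integral_tendsto] at hUσ
  have hb : ∀ (f : ℝ → ℝ) (_ : Continuous f) (B : ℝ) (_ : ∀ x, |f x| ≤ B),
      Tendsto (fun N => ∫ x, f x ∂(ν N : Measure ℝ)) U (𝓝 (∫ x, f x ∂(σ : Measure ℝ))) := by
    intro f hf B hB
    exact hUσ (BoundedContinuousFunction.ofNormedAddCommGroup f hf B hB)
  have hpos : ∀ᵐ x ∂(σ : Measure ℝ), 0 ≤ x := by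
    let f : ℝ → ℝ := fun x => min (max (-x) 0) 1
    have hfc : Continuous f := by fun_prop
    have hf0 : ∀ x, 0 ≤ f x := fun x => le_min (le_max_right _ _) zero_le_one
    have hf1 : ∀ x, |f x| ≤ 1 := fun x => by rw [abs_of_nonneg (hf0 x)]; exact min_le_right _ _
    have := hb f hfc 1 hf1
    have hz : ∀ N, ∫ x, f x ∂(ν N : Measure ℝ) = 0 := by
      intro N
      apply integral_eq_zero_of_ae
      filter_upwards [h0 N] with x hx
      simp [f, hx]
    simp only [hz] at this
    have h3 := tendsto_nhds_unique this tendsto_const_nhds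
    have hfi : Integrable f (σ : Measure ℝ) :=
      Integrable.of_bound hfc.aestronglyMeasurable 1 (Eventually.of_forall hf1)
    rw [integral_eq_zero_iff_of_nonneg hf0 hfi] at h3
    filter_upwards [h3] with x hx
    by_contra hneg
    push Not at hneg
    have : 0 < f x := lt_min (lt_max_of_lt_left (by linarith)) one_pos
    exact this.ne' hx
  have hσint : ∀ k, Integrable (fun x : ℝ => |x| ^ k) (σ : Measure ℝ) := by
    intro k
    refine ⟨by fun_prop, ?_⟩
    rw [hasFiniteIntegral_iff_ofReal (Eventually.of_forall fun x => by positivity)]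
    have hF : ∀ x : ℝ, liminf (fun n : ℕ => ENNReal.ofReal (min (|x| ^ k) n)) atTop
        = ENNReal.ofReal (|x| ^ k) := by
      intro x
      apply Tendsto.liminf_eq
      apply tendsto_const_nhds.congr'
      obtain ⟨n0, hn0⟩ := exists_nat_ge (|x| ^ k)
      filter_upwards [eventually_ge_atTop n0] with n hn
      rw [min_eq_left (hn0.trans (by exact_mod_cast hn))]
    have := lintegral_liminf_le (u := atTop) (μ := (σ : Measure ℝ))
      (f := fun (n : ℕ) (x : ℝ) => ENNReal.ofReal (min (|x| ^ k) n)) (fun n => by fun_prop)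
    simp only [hF] at this
    refine this.trans_lt (lt_of_le_of_lt (b := ENNReal.ofReal (M k)) ?_ ENNReal.ofReal_lt_top)
    apply liminf_le_of_frequently_le'
    apply Frequently.of_forall
    intro n
    have hc : Continuous fun x : ℝ => min (|x| ^ k) (n : ℝ) := by fun_prop
    have hnn : ∀ x : ℝ, 0 ≤ min (|x| ^ k) (n : ℝ) := fun x => by positivity
    have hbd : ∀ x : ℝ, |min (|x| ^ k) (n : ℝ)| ≤ n := fun x => by
      rw [abs_of_nonneg (hnn x)]; exact min_le_right _ _
    rw [← ofReal_integral_eq_lintegral_ofReal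
      (Integrable.of_bound hc.aestronglyMeasurable n (Eventually.of_forall hbd))
      (Eventually.of_forall hnn)]
    apply ENNReal.ofReal_le_ofReal
    refine le_of_tendsto (hb _ hc n hbd) (Eventually.of_forall fun N => ?_)
    refine le_trans (integral_mono
      (Integrable.of_bound hc.aestronglyMeasurable n (Eventually.of_forall hbd)) (hintg N k)
      fun x => min_le_left _ _) (habs N k)
  have hlim : ∀ p : ℝ[X], Tendsto (fun N => ∫ x, p.eval x ∂(ν N : Measure ℝ)) U
      (𝓝 (∫ x, p.eval x ∂(σ : Measure ℝ))) := by
    intro p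
    let r : ℝ[X] := (1 + p ^ 2) ^ 2
    have hr : ∀ x, r.eval x = (1 + p.eval x ^ 2) ^ 2 := fun x => by simp [r]
    let D : ℝ := ∑ i ∈ Finset.range (r.natDegree + 1), |r.coeff i| * M i
    have hD : ∀ N, ∫ x, r.eval x ∂(ν N : Measure ℝ) ≤ D := by
      intro N
      simp only [eval_eq_sum_range]
      rw [integral_finsetSum]
      · refine Finset.sum_le_sum fun i _ => ?_
        rw [integral_const_mul]
        have h1 : |∫ x, x ^ i ∂(ν N : Measure ℝ)| ≤ M i := by
          refine (abs_integral_le_integral_abs).trans ?_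
          simpa [abs_pow] using habs N i
        calc _ ≤ |r.coeff i * ∫ x, x ^ i ∂(ν N : Measure ℝ)| := le_abs_self _
          _ ≤ _ := by rw [abs_mul]; gcongr
      · intro i _
        have := integrable_poly_of_mom (hintg N) (C (r.coeff i) * X ^ i)
        simpa using this
    let D' := ∫ x, r.eval x ∂(σ : Measure ℝ)
    have hD0 : 0 ≤ D' := integral_nonneg fun x => by rw [hr]; positivity
    have hD1 : 0 ≤ D := le_trans (integral_nonneg fun x => by simp only [hr, Pi.zero_apply]; positivity) (hD 0)
    have happ : ∀ a : ℝ, 0 < a → ∀ κ : Measure ℝ, IsProbabilityMeasure κ →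
        (∀ k, Integrable (fun x : ℝ => |x| ^ k) κ) →
        |∫ x, p.eval x ∂κ - ∫ x, p.eval x / (1 + a * (1 + p.eval x ^ 2)) ∂κ| ≤
          a * ∫ x, r.eval x ∂κ := by
      intro a ha κ _ hκ
      have i1 := integrable_poly_of_mom hκ p
      have hden : ∀ x, 1 ≤ 1 + a * (1 + p.eval x ^ 2) := fun x => by
        have : 0 ≤ a * (1 + p.eval x ^ 2) := by positivity
        linarith
      have i2 : Integrable (fun x => p.eval x / (1 + a * (1 + p.eval x ^ 2))) κ := by
        refine i1.mono (Measurable.aestronglyMeasurable (by fun_prop)) (Eventually.of_forall fun x => ?_)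
        rw [norm_div]
        apply div_le_self (norm_nonneg _)
        rw [Real.norm_eq_abs]
        exact (hden x).trans (le_abs_self _)
      rw [← integral_sub i1 i2, ← integral_const_mul]
      refine (abs_integral_le_integral_abs).trans (integral_mono (i1.sub i2).abs
        ((integrable_poly_of_mom hκ r).const_mul a) fun x => ?_)
      simp only [hr]
      have hd0 : 0 < 1 + a * (1 + p.eval x ^ 2) := by linarith [hden x]
      have e : p.eval x - p.eval x / (1 + a * (1 + p.eval x ^ 2)) =
          p.eval x * (a * (1 + p.eval x ^ 2)) / (1 + a * (1 + p.eval x ^ 2)) := by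
        field_simp
        ring
      rw [e, abs_div, abs_of_pos hd0, abs_mul, abs_of_nonneg (a := a * (1 + p.eval x ^ 2)) (by positivity)]
      refine (div_le_self (by positivity) (hden x)).trans ?_
      have h1 : |p.eval x| ≤ 1 + p.eval x ^ 2 := by
        nlinarith [sq_nonneg (|p.eval x| - 1), sq_abs (p.eval x), abs_nonneg (p.eval x)]
      have h2 : 0 ≤ a * (1 + p.eval x ^ 2) := by positivity
      nlinarith
    rw [Metric.tendsto_nhds]
    intro ε hε
    let a := ε / (2 * (D + D' + 1))
    have ha : 0 < a := by positivity
    have hbt := hb (fun x => p.eval x / (1 + a * (1 + p.eval x ^ 2)))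
      (by
        refine Continuous.div (by fun_prop) (by fun_prop) fun x => ?_
        positivity) (1 / a) (by
        intro x
        rw [abs_div, abs_of_pos (a := 1 + a * (1 + p.eval x ^ 2)) (by positivity),
          div_le_div_iff₀ (by positivity) ha]
        have h1 : |p.eval x| ≤ 1 + p.eval x ^ 2 := by
          nlinarith [sq_nonneg (|p.eval x| - 1), sq_abs (p.eval x), abs_nonneg (p.eval x)]
        nlinarith)
    rw [Metric.tendsto_nhds] at hbt
    filter_upwards [hbt (ε / 2) (by positivity)] with N hN
    have A1 := happ a ha (ν N : Measure ℝ) inferInstance (hintg N)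
    have A2 := happ a ha (σ : Measure ℝ) inferInstance hσint
    rw [Real.dist_eq] at hN ⊢
    have e : a * (D + D' + 1) = ε / 2 := by
      simp only [a]; field_simp
    have h3 : a * ∫ x, r.eval x ∂(ν N : Measure ℝ) ≤ a * D := by gcongr; exact hD N
    have h4 : a * (D + D' + 1) = a * D + a * D' + a := by ring
    change _ ≤ a * D' at A2
    rw [abs_le] at A1 A2
    rw [abs_lt] at hN ⊢
    constructor <;> linarith
  refine ⟨σ, inferInstance, hpos, hσint, fun k => ?_, fun p a hp => ?_⟩
  · have := hlim (X ^ k)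
    simp only [eval_pow, eval_X] at this
    exact le_of_tendsto this (Eventually.of_forall fun N => hM N k)
  · refine tendsto_nhds_unique (hlim p) ?_
    apply tendsto_const_nhds.congr'
    filter_upwards [hU hp] with N hN using hN.symm

lemma spectral_seq (l m : ℕ → ℝ) (hl : ∀ n, 0 ≤ l n) (hm : ∀ n, 0 ≤ m n) (hm0 : m 0 = 0) (N : ℕ) :
    ∃ (ev : Fin (N + 1) → ℝ) (v : Fin (N + 1) → ℕ → ℝ), (∀ i, 0 ≤ ev i) ∧
      (∀ i n, N < n → v i n = 0) ∧
      (∀ i n, n ≤ N → ev i * v i n = √(l n) * (√(l n) * v i n + √(m (n + 1)) * v i (n + 1))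
        + √(m n) * (√(l (n - 1)) * v i (n - 1) + √(m n) * v i n)) ∧
      (∀ n k, n ≤ N → k ≤ N → ∑ i, v i n * v i k = if n = k then 1 else 0) := by
  classical
  let L : Matrix (Fin (N + 1)) (Fin (N + 1)) ℝ := fun i j =>
    if i = j then √(l j) else if (i : ℕ) = j + 1 then √(m (j + 1)) else 0
  have hJ : (L * L.conjTranspose).PosSemidef := Matrix.posSemidef_self_mul_conjTranspose L
  let hH := hJ.isHermitian
  let v : Fin (N + 1) → ℕ → ℝ := fun i n =>
    if h : n < N + 1 then hH.eigenvectorBasis i ⟨n, h⟩ else 0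
  have hv : ∀ i (n : Fin (N + 1)), v i n = hH.eigenvectorBasis i n := by
    intro i n; simp only [v]; rw [dif_pos n.2]
  have hv0 : ∀ i n, N < n → v i n = 0 := by
    intro i n h; simp only [v]; rw [dif_neg (by omega)]
  refine ⟨hH.eigenvalues, v, hJ.eigenvalues_nonneg, hv0, ?_, ?_⟩
  · intro i n hn
    have h1 := hH.mulVec_eigenvectorBasis i
    have h2 := congrFun h1 ⟨n, by omega⟩
    rw [← Matrix.mulVec_mulVec] at h2
    simp only [Pi.smul_apply, smul_eq_mul] at h2
    have hz : ∀ k : Fin (N + 1),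
        (L.conjTranspose.mulVec (WithLp.ofLp (hH.eigenvectorBasis i))) k =
          √(l k) * v i k + √(m (k + 1)) * v i (k + 1) := by
      intro k
      simp only [Matrix.mulVec, dotProduct, Matrix.conjTranspose_apply, star_trivial]
      have : ∀ j : Fin (N + 1), L j k * (WithLp.ofLp (hH.eigenvectorBasis i)) j =
          (if j = k then √(l k) * v i k else 0) +
            (if (j : ℕ) = k + 1 then √(m (k + 1)) * v i (k + 1) else 0) := by
        intro j
        simp only [L]
        rw [← hv]
        by_cases h : j = k
        · subst h; simp
        · by_cases h' : (j : ℕ) = k + 1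
          · simp [h, h']
          · simp [h, h']
      rw [Finset.sum_congr rfl fun j _ => this j, Finset.sum_add_distrib]
      congr 1
      · simp
      · by_cases hk : (k : ℕ) + 1 ≤ N
        · rw [Finset.sum_eq_single ⟨k + 1, by omega⟩]
          · simp
          · intro b _ hb
            rw [if_neg]
            intro h; exact hb (Fin.ext h)
          · simp
        · rw [hv0 i _ (by omega), mul_zero]
          simp
    have hLz : ∀ (z : Fin (N + 1) → ℝ) (z' : ℕ → ℝ), (∀ k : Fin (N + 1), z k = z' k) →
        L.mulVec z ⟨n, by omega⟩ = √(l n) * z' n + √(m n) * z' (n - 1) := by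
      intro z z' hzz
      simp only [Matrix.mulVec, dotProduct]
      have : ∀ j : Fin (N + 1), L ⟨n, by omega⟩ j * z j =
          (if j = ⟨n, by omega⟩ then √(l n) * z' n else 0) +
            (if (j : ℕ) + 1 = n then √(m n) * z' (n - 1) else 0) := by
        intro j
        simp only [L]
        rw [hzz]
        by_cases h : j = ⟨n, by omega⟩
        · subst h; simp
        · by_cases h' : (j : ℕ) + 1 = n
          · have h2 : ¬ (⟨n, by omega⟩ : Fin (N + 1)) = j := fun e => h e.symm
            rw [if_neg h2, if_pos h'.symm, if_neg h, if_pos h', h', ← h']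
            simp
          · have h2 : ¬ (⟨n, by omega⟩ : Fin (N + 1)) = j := fun e => h e.symm
            have h3 : ¬ n = (j : ℕ) + 1 := fun e => h' e.symm
            simp [h, h', h2, h3]
      rw [Finset.sum_congr rfl fun j _ => this j, Finset.sum_add_distrib]
      congr 1
      · simp
      · rcases n with _ | n
        · simp [hm0]
        · rw [Finset.sum_eq_single ⟨n, by omega⟩]
          · simp
          · intro b _ hb
            rw [if_neg]
            intro h; exact hb (Fin.ext (by simpa using h))
          · simp
    rw [hLz _ (fun k => √(l k) * v i k + √(m (k + 1)) * v i (k + 1)) hz] at h2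
    have h3 := hv i ⟨n, by omega⟩
    simp only at h3
    rw [h3, ← h2, ← h3]
    rcases n with _ | n
    · simp [hm0]
    · simp
  · intro n k hn hk
    have hU := (Matrix.mem_unitaryGroup_iff).mp hH.eigenvectorUnitary.2
    have := congrFun (congrFun hU ⟨n, by omega⟩) ⟨k, by omega⟩
    rw [Matrix.mul_apply, Matrix.one_apply] at this
    simp only [Fin.mk.injEq] at this
    rw [← this]
    refine Finset.sum_congr rfl fun i _ => ?_
    have a1 := hv i ⟨n, by omega⟩
    have a2 := hv i ⟨k, by omega⟩
    simp only at a1 a2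
    rw [a1, a2]
    simp [Matrix.star_apply, Matrix.IsHermitian.eigenvectorUnitary_apply]

lemma ascF_mono (k : ℕ) {a b : ℕ} (h : a ≤ b) : a.ascFactorial k ≤ b.ascFactorial k := by
  induction k with
  | zero => simp
  | succ k ih =>
    rw [Nat.ascFactorial_succ, Nat.ascFactorial_succ]
    exact Nat.mul_le_mul (by omega) ih

/-- The moment bound for a truncated Jacobi matrix. -/
lemma moment_bound (l m : ℕ → ℝ) (K : ℝ) (hK : 0 < K)
    (hlK : ∀ n, l n ≤ K * (n + 1) ^ 2) (hmK : ∀ n, m n ≤ K * (n + 1) ^ 2)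
    (hl : ∀ n, 0 ≤ l n) (hm : ∀ n, 0 ≤ m n) (N : ℕ) (r : ℕ → ℕ → ℝ)
    (h0 : ∀ j, |r 0 j| ≤ 1) (hz : ∀ k j, N < j → r k j = 0)
    (hr : ∀ k j, j ≤ N → r (k + 1) j =
      √(l j) * (√(l j) * r k j + √(m (j + 1)) * r k (j + 1))
        + √(m j) * (√(l (j - 1)) * r k (j - 1) + √(m j) * r k j)) (k : ℕ) :
    ∀ j, |r k j| ≤ (5 * K) ^ k * (((j + 1).ascFactorial k : ℕ) : ℝ) ^ 2 := by
  induction k with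
  | zero => intro j; simpa using h0 j
  | succ k ih =>
    intro j
    by_cases hj : N < j
    · rw [hz _ _ hj]; simp only [abs_zero]; positivity
    push Not at hj
    rw [hr k j hj]
    have hsl : ∀ n, √(l n) ≤ √K * (n + 1) := by
      intro n
      rw [Real.sqrt_le_left (by positivity), mul_pow, Real.sq_sqrt hK.le]; exact hlK n
    have hsm : ∀ n, √(m n) ≤ √K * (n + 1) := by
      intro n
      rw [Real.sqrt_le_left (by positivity), mul_pow, Real.sq_sqrt hK.le]; exact hmK n
    set G : ℝ := (((j + 1).ascFactorial (k + 1) : ℕ) : ℝ) with hG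
    have e1 : G = ((j : ℝ) + 1) * (((j + 1 + 1).ascFactorial k : ℕ) : ℝ) := by
      rw [hG, Nat.ascFactorial_succ, ← Nat.succ_ascFactorial]; push_cast; rfl
    set f1 : ℝ := (((j + 1 + 1).ascFactorial k : ℕ) : ℝ) with hf1
    set f0 : ℝ := (((j + 1).ascFactorial k : ℕ) : ℝ) with hf0
    have f01 : f0 ≤ f1 := Nat.cast_le.2 (ascF_mono k (by omega))
    have f00 : 0 ≤ f0 := by positivity
    have i1 : |r k j| ≤ (5 * K) ^ k * f1 ^ 2 := (ih j).trans (by gcongr)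
    have i2 : |r k (j + 1)| ≤ (5 * K) ^ k * f1 ^ 2 := ih (j + 1)
    have i3 : |r k (j - 1)| ≤ (5 * K) ^ k * f1 ^ 2 := by
      refine (ih (j - 1)).trans ?_
      have : (((j - 1 + 1).ascFactorial k : ℕ) : ℝ) ≤ f1 := Nat.cast_le.2 (ascF_mono k (by omega))
      gcongr
    set W := (5 * K) ^ k * f1 ^ 2 with hW
    have hW0 : 0 ≤ W := by positivity
    have hlj : √(l (j - 1)) ≤ √K * (j + 1) := (hsl _).trans (by
      gcongr; exact_mod_cast Nat.sub_le _ _)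
    have hmj : √(m (j + 1)) ≤ √K * (2 * (j + 1)) := (hsm _).trans (by
      gcongr; push_cast; linarith [(Nat.cast_nonneg j : (0:ℝ) ≤ j)])
    have hKK : √K * √K = K := Real.mul_self_sqrt hK.le
    calc |√(l j) * (√(l j) * r k j + √(m (j + 1)) * r k (j + 1))
        + √(m j) * (√(l (j - 1)) * r k (j - 1) + √(m j) * r k j)|
        ≤ √(l j) * (√(l j) * |r k j| + √(m (j + 1)) * |r k (j + 1)|)
        + √(m j) * (√(l (j - 1)) * |r k (j - 1)| + √(m j) * |r k j|) := by
          refine (abs_add_le _ _).trans ?_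
          rw [abs_mul, abs_mul, abs_of_nonneg (Real.sqrt_nonneg _),
            abs_of_nonneg (Real.sqrt_nonneg _)]
          gcongr
          · refine (abs_add_le _ _).trans ?_
            rw [abs_mul, abs_mul, abs_of_nonneg (Real.sqrt_nonneg _),
              abs_of_nonneg (Real.sqrt_nonneg _)]
          · refine (abs_add_le _ _).trans ?_
            rw [abs_mul, abs_mul, abs_of_nonneg (Real.sqrt_nonneg _),
              abs_of_nonneg (Real.sqrt_nonneg _)]
      _ ≤ (√K * (j + 1)) * ((√K * (j + 1)) * W + (√K * (2 * (j + 1))) * W)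
        + (√K * (j + 1)) * ((√K * (j + 1)) * W + (√K * (j + 1)) * W) := by
          gcongr
          · exact hsl j
          · exact hsl j
          · exact hsm j
          · exact hsm j
      _ = 5 * (√K * √K) * (j + 1) ^ 2 * W := by ring
      _ = (5 * K) ^ (k + 1) * G ^ 2 := by rw [hKK, hW, e1]; ring

lemma hardy_of_moments (σ : Measure ℝ) [IsProbabilityMeasure σ] (K : ℝ) (hK : 0 < K)
    (h0 : ∀ᵐ x ∂σ, 0 ≤ x) (hintg : ∀ k : ℕ, Integrable (fun x : ℝ => |x| ^ k) σ)
    (hM : ∀ k : ℕ, ∫ x, x ^ k ∂σ ≤ (5 * K) ^ k * (k.factorial : ℝ) ^ 2) : HardyM 0 σ := by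
  refine ⟨by simpa using h0, ?_⟩
  let ε := √(1 / (10 * K))
  have hε : 0 < ε := Real.sqrt_pos.2 (by positivity)
  have hε2 : ε ^ 2 = 1 / (10 * K) := Real.sq_sqrt (by positivity)
  refine ⟨ε, hε, ?_⟩
  have hfac : ∀ k : ℕ, (k.factorial : ℝ) ^ 2 ≤ ((2 * k).factorial : ℝ) := by
    intro k
    have := Nat.factorial_mul_factorial_dvd_factorial_add k k
    have := Nat.le_of_dvd (Nat.factorial_pos _) this
    rw [two_mul, sq]; exact_mod_cast this
  refine ⟨by fun_prop, ?_⟩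
  rw [hasFiniteIntegral_iff_ofReal (Eventually.of_forall fun x => (Real.exp_pos _).le)]
  have hle : ∀ᵐ x ∂σ, ENNReal.ofReal (Real.exp (ε * √(x + 0))) ≤
      ∑' k : ℕ, ENNReal.ofReal (2 * (ε ^ (2 * k) * |x| ^ k / ((2 * k).factorial : ℝ))) := by
    filter_upwards [h0] with x hx
    have hs := (Real.hasSum_cosh (ε * √x)).mul_left 2
    have he : ∀ k : ℕ, 2 * ((ε * √x) ^ (2 * k) / ((2 * k).factorial : ℝ)) =
        2 * (ε ^ (2 * k) * |x| ^ k / ((2 * k).factorial : ℝ)) := by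
      intro k
      rw [mul_pow, pow_mul (√x), Real.sq_sqrt hx, abs_of_nonneg hx]
    simp only [he] at hs
    rw [← ENNReal.ofReal_tsum_of_nonneg (fun k => by positivity) hs.summable, hs.tsum_eq]
    apply ENNReal.ofReal_le_ofReal
    rw [Real.cosh_eq, add_zero]
    linarith [Real.exp_pos (-(ε * √x))]
  refine (lintegral_mono_ae hle).trans_lt ?_
  rw [lintegral_tsum (fun k => by fun_prop)]
  have hb : ∀ k : ℕ, ∫⁻ x, ENNReal.ofReal (2 * (ε ^ (2 * k) * |x| ^ k / ((2 * k).factorial : ℝ))) ∂σ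
      ≤ ENNReal.ofReal (2 * (1 / 2) ^ k) := by
    intro k
    have hi : Integrable (fun x : ℝ => 2 * (ε ^ (2 * k) * |x| ^ k / ((2 * k).factorial : ℝ))) σ :=
      (((hintg k).const_mul _).div_const _).const_mul _
    rw [← ofReal_integral_eq_lintegral_ofReal hi (Eventually.of_forall fun x => by positivity)]
    apply ENNReal.ofReal_le_ofReal
    rw [integral_const_mul, integral_div, integral_const_mul]
    have e : ∫ x, |x| ^ k ∂σ = ∫ x, x ^ k ∂σ := by
      apply integral_congr_ae
      filter_upwards [h0] with x hx
      rw [abs_of_nonneg hx]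
    rw [e]
    have hfp : (0:ℝ) < ((2 * k).factorial : ℝ) := by positivity
    gcongr
    rw [div_le_iff₀ hfp]
    calc ε ^ (2 * k) * ∫ x, x ^ k ∂σ ≤ ε ^ (2 * k) * ((5 * K) ^ k * (k.factorial : ℝ) ^ 2) := by
          gcongr; exact hM k
      _ = (1 / 2) ^ k * (k.factorial : ℝ) ^ 2 := by
          rw [pow_mul, hε2, ← mul_assoc, ← mul_pow]; congr 2; field_simp; norm_num
      _ ≤ _ := by gcongr; exact hfac k
  refine (ENNReal.tsum_le_tsum hb).trans_lt ?_
  rw [← ENNReal.ofReal_tsum_of_nonneg (fun k => by positivity)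
    ((summable_geometric_of_lt_one (by norm_num) (by norm_num)).mul_left 2)]
  exact ENNReal.ofReal_lt_top

lemma favard0 (l m : ℕ → ℝ) (K : ℝ) (hK : 0 < K)
    (hl : ∀ n, 0 ≤ l n) (hm : ∀ n, 0 ≤ m n) (hm0 : m 0 = 0)
    (hlK : ∀ n, l n ≤ K * (n + 1) ^ 2) (hmK : ∀ n, m n ≤ K * (n + 1) ^ 2)
    (Q : ℕ → ℝ[X]) (B Γ : ℕ → ℝ) (hQ0 : Q 0 = 1)
    (hQ : ∀ n, X * Q n = Q (n + 1) + C (B n) * Q n + C (Γ n) * Q (n - 1)) (hΓ0 : Γ 0 = 0)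
    (hB : ∀ n, (∏ j ∈ Finset.range n, (√(l j) * √(m (j + 1)))) * (B n - (l n + m n)) = 0)
    (hΓ : ∀ n, (∏ j ∈ Finset.range n, (√(l j) * √(m (j + 1)))) *
      (Γ (n + 1) - l n * m (n + 1)) = 0) :
    ∃ σ : Measure ℝ, IsProbabilityMeasure σ ∧ HardyM 0 σ ∧
      ∀ n, 1 ≤ n → ∫ x, (Q n).eval x ∂σ = 0 := by
  classical
  choose ev v hev hv0 hrec horth using spectral_seq l m hl hm hm0
  let π : ℕ → ℝ := fun n => ∏ j ∈ Finset.range n, (√(l j) * √(m (j + 1)))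
  have hπ : ∀ n, π (n + 1) = π n * (√(l n) * √(m (n + 1))) := fun n => Finset.prod_range_succ _ _
  -- eigenvector values
  have hQv : ∀ N i n, n ≤ N → (Q n).eval (ev N i) * v N i 0 = π n * v N i n ∧
      (Q (n - 1)).eval (ev N i) * v N i 0 = π (n - 1) * v N i (n - 1) := by
    intro N i n
    induction n with
    | zero => intro _; simp [hQ0, π]
    | succ n ih =>
      intro hn
      obtain ⟨i1, i2⟩ := ih (by omega)
      refine ⟨?_, by simpa using i1⟩
      have e := congrArg (Polynomial.eval (ev N i)) (hQ n)
      simp only [eval_mul, eval_X, eval_add, eval_C] at e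
      have r := hrec N i n (by omega)
      have s1 := Real.mul_self_sqrt (hl n)
      have s2 := Real.mul_self_sqrt (hm n)
      have hb := hB n
      change π n * _ = 0 at hb
      rw [hπ]
      rcases n with _ | n
      · simp only [hΓ0, hm0, Real.sqrt_zero] at *
        linear_combination (v N i 0) * (-e) + (ev N i - B 0) * i1 + (π 0) * r
          - (v N i 0) * hb + π 0 * v N i 0 * s1
      · have hg := hΓ n
        change π n * _ = 0 at hg
        simp only [Nat.add_sub_cancel] at *
        have s3 := Real.mul_self_sqrt (hl n)
        have hπn := hπ n
        have t : π (n + 1) * (√(m (n + 1)) * √(l n)) = π n * Γ (n + 1) := by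
          rw [hπn]
          linear_combination (-1) * hg + π n * m (n + 1) * s3 + π n * √(l n) * √(l n) * s2
        linear_combination (v N i 0) * (-e) + (ev N i - B (n+1)) * i1 + (π (n+1)) * r
          - (v N i (n+1)) * hb + π (n+1) * v N i (n+1) * (s1 + s2) - Γ (n+1) * i2 + v N i n * t
  -- measures
  let νm : ℕ → Measure ℝ := fun N => ∑ i, ENNReal.ofReal ((v N i 0) ^ 2) • Measure.dirac (ev N i)
  have hintg : ∀ N (f : ℝ → ℝ), Integrable f (νm N) := by
    intro N f
    refine integrable_finsetSum_measure.2 fun i _ => ?_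
    exact (integrable_dirac (by simp)).smul_measure ENNReal.ofReal_ne_top
  have hval : ∀ N (f : ℝ → ℝ), ∫ x, f x ∂(νm N) = ∑ i, (v N i 0) ^ 2 * f (ev N i) := by
    intro N f
    rw [integral_finsetSum_measure fun i _ =>
      (integrable_dirac (by simp)).smul_measure ENNReal.ofReal_ne_top]
    refine Finset.sum_congr rfl fun i _ => ?_
    rw [integral_smul_measure, integral_dirac, ENNReal.toReal_ofReal (sq_nonneg _), smul_eq_mul]
  have hprob : ∀ N, IsProbabilityMeasure (νm N) := by
    intro N
    constructor
    simp only [νm, Measure.finsetSum_apply, Measure.smul_apply, measure_univ, smul_eq_mul, mul_one]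
    rw [← ENNReal.ofReal_sum_of_nonneg fun i _ => sq_nonneg _]
    have := horth N 0 0 (by omega) (by omega)
    simp only [if_true] at this
    simp only [sq, this, ENNReal.ofReal_one]
  let M : ℕ → ℝ := fun k => (5 * K) ^ k * (k.factorial : ℝ) ^ 2
  have hmom : ∀ N k, ∫ x, x ^ k ∂(νm N) ≤ M k := by
    intro N k
    rw [hval]
    have := moment_bound l m K hK hlK hmK hl hm N
      (fun k j => ∑ i, v N i 0 * ev N i ^ k * v N i j) (by
        intro j
        simp only [pow_zero, mul_one]
        by_cases hj : j ≤ N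
        · rw [horth N 0 j (by omega) hj]; split_ifs <;> simp
        · simp [hv0 N _ j (by omega)]) (by
        intro k j hj; simp [hv0 N _ j hj]) (by
        intro k j hj
        simp only [Finset.mul_sum, ← Finset.sum_add_distrib]
        refine Finset.sum_congr rfl fun i _ => ?_
        have := hrec N i j hj
        rw [pow_succ]
        linear_combination (v N i 0 * ev N i ^ k) * this) k 0
    simp only [zero_add, Nat.one_ascFactorial] at this
    refine le_trans (le_of_eq ?_) ((le_abs_self _).trans this)
    refine Finset.sum_congr rfl fun i _ => ?_
    ring
  obtain ⟨σ, hσp, hσ0, hσi, hσM, hσ⟩ := limit_measure (fun N => ⟨νm N, hprob N⟩) M (by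
      intro N
      change ∀ᵐ x ∂νm N, 0 ≤ x
      simp only [νm]
      rw [ae_iff, Measure.finsetSum_apply]
      refine Finset.sum_eq_zero fun i _ => ?_
      rw [Measure.smul_apply, Measure.dirac_apply' _ (by measurability)]
      simp [hev N i]) (fun N k => hintg N _) (fun N k => hmom N k)
  refine ⟨σ, hσp, hardy_of_moments σ K hK hσ0 hσi hσM, fun n hn => ?_⟩
  refine hσ (Q n) 0 ?_
  filter_upwards [eventually_ge_atTop n] with N hN
  change ∫ x, (Q n).eval x ∂(νm N) = 0
  rw [hval]
  have : ∀ i, (v N i 0) ^ 2 * (Q n).eval (ev N i) = π n * (v N i 0 * v N i n) := by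
    intro i; linear_combination (v N i 0) * (hQv N i n hN).1
  simp only [this]
  rw [← Finset.mul_sum, horth N 0 n (by omega) hN, if_neg (by omega), mul_zero]

lemma HardyM.map_sub {c : ℝ} {σ : Measure ℝ} (h : HardyM 0 σ) :
    HardyM c (σ.map fun x => x - c) := by
  have hm : Measurable fun x : ℝ => x - c := by fun_prop
  obtain ⟨h0, ε, hε, hi⟩ := h
  refine ⟨?_, ε, hε, ?_⟩
  · rw [ae_map_iff hm.aemeasurable (by measurability)]
    filter_upwards [h0] with x hx
    linarith
  · rw [integrable_map_measure (by fun_prop) hm.aemeasurable]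
    refine hi.congr (Eventually.of_forall fun x => ?_)
    simp

lemma favard (c : ℝ) (l m : ℕ → ℝ) (K : ℝ) (hK : 0 < K)
    (hl : ∀ n, 0 ≤ l n) (hm : ∀ n, 0 ≤ m n) (hm0 : m 0 = 0)
    (hlK : ∀ n, l n ≤ K * (n + 1) ^ 2) (hmK : ∀ n, m n ≤ K * (n + 1) ^ 2)
    (Q : ℕ → ℝ[X]) (B Γ : ℕ → ℝ) (hQ0 : Q 0 = 1)
    (hQ : ∀ n, X * Q n = Q (n + 1) + C (B n - c) * Q n + C (Γ n) * Q (n - 1)) (hΓ0 : Γ 0 = 0)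
    (hB : ∀ n, (∏ j ∈ Finset.range n, (√(l j) * √(m (j + 1)))) * (B n - (l n + m n)) = 0)
    (hΓ : ∀ n, (∏ j ∈ Finset.range n, (√(l j) * √(m (j + 1)))) *
      (Γ (n + 1) - l n * m (n + 1)) = 0) :
    ∃ σ : Measure ℝ, IsProbabilityMeasure σ ∧ HardyM c σ ∧
      ∀ n, 1 ≤ n → ∫ x, (Q n).eval x ∂σ = 0 := by
  obtain ⟨σ, hp, hσ, hi⟩ := favard0 l m K hK hl hm hm0 hlK hmK
    (fun n => (Q n).comp (X - C c)) B Γ (by simp [hQ0]) (by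
      intro n
      have := congrArg (fun p : ℝ[X] => p.comp (X - C c)) (hQ n)
      simp only [mul_comp, add_comp, X_comp, C_comp, C_sub, sub_comp] at this
      linear_combination this) hΓ0 hB hΓ
  have hm : Measurable fun x : ℝ => x - c := by fun_prop
  refine ⟨σ.map fun x => x - c, Measure.isProbabilityMeasure_map hm.aemeasurable,
    hσ.map_sub, fun n hn => ?_⟩
  rw [integral_map hm.aemeasurable (by fun_prop)]
  simpa using hi n hn

lemma HardyM.mom {c : ℝ} {σ : Measure ℝ} [IsFiniteMeasure σ] (h : HardyM c σ) (n : ℕ) :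
    Integrable (fun y : ℝ => |y| ^ n) σ := by
  have := (h.memLp_poly (X ^ n)).abs
  simpa [abs_pow] using this

/-- Monic polynomials defined by a three-term recurrence. -/
noncomputable def ttr (b g : ℕ → ℝ) : ℕ → ℝ[X]
  | 0 => 1
  | 1 => X - C (b 0)
  | (n + 2) => (X - C (b (n + 1))) * ttr b g (n + 1) - C (g (n + 1)) * ttr b g n

lemma ttr_zero (b g : ℕ → ℝ) : ttr b g 0 = 1 := by simp [ttr]

lemma ttr_rec (b g : ℕ → ℝ) (hg : g 0 = 0) (n : ℕ) :
    X * ttr b g n = ttr b g (n + 1) + C (b n) * ttr b g n + C (g n) * ttr b g (n - 1) := by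
  rcases n with _ | n
  · simp [ttr, hg]
  · simp only [ttr, Nat.add_sub_cancel]; ring

lemma rec_unique {b g : ℕ → ℝ} {P S : ℕ → ℝ[X]} (hP0 : P 0 = 1) (hS0 : S 0 = 1)
    (hP : ∀ n, X * P n = P (n + 1) + C (b n) * P n + C (g n) * P (n - 1))
    (hS : ∀ n, X * S n = S (n + 1) + C (b n) * S n + C (g n) * S (n - 1)) (n : ℕ) :
    P n = S n ∧ P (n - 1) = S (n - 1) := by
  induction n with
  | zero => simp [hP0, hS0]
  | succ n ih =>
    refine ⟨?_, by simpa using ih.1⟩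
    have h1 := hP n
    have h2 := hS n
    rw [ih.1, ih.2] at h1
    linear_combination h2 - h1

lemma rec_induction {b g : ℕ → ℝ} {P : ℕ → ℝ[X]} (hP0 : P 0 = 1)
    (hP : ∀ n, X * P n = P (n + 1) + C (b n) * P n + C (g n) * P (n - 1)) :
    Submodule.span ℝ (Set.range P) = ⊤ := by
  set W := Submodule.span ℝ (Set.range P) with hW
  have hmem : ∀ n, P n ∈ W := fun n => Submodule.subset_span ⟨n, rfl⟩
  have hX : ∀ p ∈ W, X * p ∈ W := by
    intro p hp
    induction hp using Submodule.span_induction with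
    | mem x hx =>
      obtain ⟨n, rfl⟩ := hx
      rw [hP n, C_mul', C_mul']
      exact W.add_mem (W.add_mem (hmem _) (W.smul_mem _ (hmem _))) (W.smul_mem _ (hmem _))
    | zero => simp
    | add x y _ _ hx hy => rw [mul_add]; exact W.add_mem hx hy
    | smul a x _ hx => rw [mul_smul_comm]; exact W.smul_mem _ hx
  rw [eq_top_iff]
  intro p _
  have hpow : ∀ n, (X ^ n : ℝ[X]) ∈ W := by
    intro n
    induction n with
    | zero => rw [pow_zero, ← hP0]; exact hmem 0
    | succ n ih => rw [pow_succ']; exact hX _ ih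
  rw [p.as_sum_range_C_mul_X_pow]
  refine W.sum_mem fun i _ => ?_
  rw [C_mul']
  exact W.smul_mem _ (hpow i)

/-- Connection coefficients between two three-term recurrences. -/
lemma connection {b g B Γ : ℕ → ℝ} {P Q : ℕ → ℝ[X]} (hP0 : P 0 = 1) (hQ0 : Q 0 = 1)
    (hP : ∀ n, X * P n = P (n + 1) + C (b n) * P n + C (g n) * P (n - 1))
    (hQ : ∀ n, X * Q n = Q (n + 1) + C (B n) * Q n + C (Γ n) * Q (n - 1)) (hΓ0 : Γ 0 = 0)
    (d : ℕ → ℕ → ℝ) (hd : ∀ n k, n < k → d n k = 0) (hd0 : d 0 0 = 1)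
    (hdr0 : ∀ n, d (n + 1) 0 = (B 0 - b n) * d n 0 + Γ 1 * d n 1 - g n * d (n - 1) 0)
    (hdr : ∀ n k, d (n + 1) (k + 1) = d n k + (B (k + 1) - b n) * d n (k + 1)
      + Γ (k + 2) * d n (k + 2) - g n * d (n - 1) (k + 1)) (n : ℕ) :
    (∀ M, n < M → P n = ∑ k ∈ Finset.range M, C (d n k) * Q k) ∧
    (∀ M, n < M → P (n - 1) = ∑ k ∈ Finset.range M, C (d (n - 1) k) * Q k) := by
  induction n with
  | zero =>
    have : ∀ M, 0 < M → P 0 = ∑ k ∈ Finset.range M, C (d 0 k) * Q k := by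
      intro M hM
      rw [Finset.sum_eq_single 0]
      · simp [hd0, hP0, hQ0]
      · intro k _ hk
        simp [hd 0 k (by omega)]
      · intro h; simp at h; omega
    exact ⟨this, this⟩
  | succ n ih =>
    obtain ⟨i1, i2⟩ := ih
    refine ⟨?_, fun M hM => by simpa using i1 M (by omega)⟩
    intro M hM
    obtain ⟨M', rfl⟩ : ∃ M', M = M' + 1 := ⟨M - 1, by omega⟩
    have e : P (n + 1) = X * P n - C (b n) * P n - C (g n) * P (n - 1) := by
      linear_combination (-1 : ℝ[X]) * hP n
    have hXP : X * P n = ∑ k ∈ Finset.range M', C (d n k) * Q (k + 1)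
        + ∑ k ∈ Finset.range (M' + 1), C (d n k * B k) * Q k
        + ∑ k ∈ Finset.range (M' + 1), C (d n (k + 1) * Γ (k + 1)) * Q k := by
      rw [i1 (M' + 1) (by omega), Finset.mul_sum]
      have h : ∀ k ∈ Finset.range (M' + 1), X * (C (d n k) * Q k) =
          C (d n k) * Q (k + 1) + C (d n k * B k) * Q k + C (d n k * Γ k) * Q (k - 1) := by
        intro k _
        rw [mul_left_comm, hQ k, C_mul, C_mul]; ring
      rw [Finset.sum_congr rfl h, Finset.sum_add_distrib, Finset.sum_add_distrib]
      congr 1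
      · congr 1
        rw [Finset.sum_range_succ, hd n M' (by omega)]; simp
      · rw [Finset.sum_range_succ', Finset.sum_range_succ, hd n (M' + 1) (by omega)]
        simp [hΓ0]
    rw [e, hXP, i2 (M' + 1) (by omega)]
    nth_rewrite 1 [i1 (M' + 1) (by omega)]
    rw [Finset.sum_range_succ' (fun k => C (d (n + 1) k) * Q k)]
    simp only [hdr, hdr0]
    rw [Finset.sum_range_succ' (fun k => C (d n k * B k) * Q k),
      Finset.sum_range_succ' (fun k => C (d n (k + 1) * Γ (k + 1)) * Q k),
      Finset.sum_range_succ' (fun k => C (d n k) * Q k),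
      Finset.sum_range_succ' (fun k => C (d (n - 1) k) * Q k)]
    simp only [C_add, C_sub, C_mul, add_mul, sub_mul, Finset.sum_add_distrib,
      Finset.sum_sub_distrib, Finset.mul_sum, mul_add, mul_sub, zero_add]
    have c1 : ∀ (x : ℕ → ℝ[X]) (y : ℕ → ℝ[X]) (z : ℕ → ℝ[X]),
        ∑ k ∈ Finset.range M', x k * y k * z k = ∑ k ∈ Finset.range M', y k * x k * z k :=
      fun x y z => Finset.sum_congr rfl fun k _ => by ring
    rw [c1 (fun k => C (B (k + 1))), c1 (fun k => C (Γ (k + 2)))]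
    simp only [mul_assoc]
    ring

lemma qnum_zero' (q : ℝ) : qnum q 0 = 0 := by simp [qnum]

lemma qnum_add' (q : ℝ) (k m : ℕ) : qnum q (k + m) = qnum q k + q ^ k * qnum q m := by
  simp only [qnum, Finset.sum_range_add, Finset.mul_sum, pow_add]

lemma qnum_succ' (q : ℝ) (k : ℕ) : qnum q (k + 1) = 1 + q * qnum q k := by
  rw [add_comm, qnum_add']; simp [qnum]

lemma qpow_eq (q : ℝ) (k : ℕ) : q ^ k = 1 - (1 - q) * qnum q k := by
  induction k with
  | zero => simp [qnum]
  | succ k ih => rw [qnum_succ', pow_succ, ih]; ring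

/-- Diagonal recurrence coefficient of the auxiliary family. -/
noncomputable def tb (η θ τ q s : ℝ) (k n : ℕ) : ℝ :=
  θ * qnum q n + η * τ * qnum q n * (qnum q (k + n) + qnum q k) + q ^ k * cCoef η τ q s n
    + s * η * qnum q k

/-- Off-diagonal recurrence coefficient of the auxiliary family. -/
noncomputable def tg (η θ τ q s : ℝ) (k n : ℕ) : ℝ :=
  aCoef η θ τ q (k + n - 1) * cCoef η τ q s n

/-- The auxiliary family of polynomials. -/
noncomputable def tT (η θ τ q s : ℝ) (k : ℕ) : ℕ → ℝ[X] :=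
  ttr (tb η θ τ q s k) (tg η θ τ q s k)

/-- The coefficient `A_k(x,s)` as a polynomial in `x`. -/
noncomputable def polyA (η θ τ q s : ℝ) (k : ℕ) : ℝ[X] :=
  C (aCoef η θ τ q k - s * η * q ^ k * qnum q k) + C (q ^ k) * X

lemma cCoef_zero (η τ q s : ℝ) : cCoef η τ q s 0 = 0 := by simp [cCoef, qnum_zero']

lemma tg_zero (η θ τ q s : ℝ) (k : ℕ) : tg η θ τ q s k 0 = 0 := by simp [tg, cCoef_zero]

lemma tT_zero (η θ τ q s : ℝ) (k : ℕ) : tT η θ τ q s k 0 = 1 := ttr_zero _ _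

lemma tT_rec (η θ τ q s : ℝ) (k n : ℕ) : X * tT η θ τ q s k n = tT η θ τ q s k (n + 1)
    + C (tb η θ τ q s k n) * tT η θ τ q s k n + C (tg η θ τ q s k n) * tT η θ τ q s k (n - 1) :=
  ttr_rec _ _ (tg_zero ..) n

lemma tT_rel1 (η θ τ q s : ℝ) (k n : ℕ) : tT η θ τ q s k n = tT η θ τ q s (k + 1) n
    + C (q ^ k * cCoef η τ q s n) * tT η θ τ q s (k + 1) (n - 1) := by
  refine (rec_unique (P := tT η θ τ q s k) (S := fun n => tT η θ τ q s (k + 1) n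
    + C (q ^ k * cCoef η τ q s n) * tT η θ τ q s (k + 1) (n - 1)) (tT_zero ..)
    (by simp [tT_zero, cCoef_zero]) (tT_rec η θ τ q s k) ?_ n).1
  intro n
  have h1 := tT_rec η θ τ q s (k + 1) n
  have key1 : tb η θ τ q s (k + 1) n + q ^ k * cCoef η τ q s n =
      q ^ k * cCoef η τ q s (n + 1) + tb η θ τ q s k n := by
    rcases n with _ | n
    · simp only [tb, cCoef, qnum_add' q k, qnum_add' q (k + 1), qnum_zero', pow_succ q k, qpow_eq q k, qnum_succ', Nat.add_sub_cancel,
        Nat.sub_self, zero_add]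
      ring
    · simp only [tb, cCoef, Nat.add_sub_cancel, qnum_add' q k, qnum_add' q (k + 1), pow_succ q k, qpow_eq q k,
        qnum_succ', qnum_zero']
      ring
  have key1' := congrArg (C : ℝ → ℝ[X]) key1
  simp only [C_add] at key1'
  rcases n with _ | n
  · simp only [cCoef_zero, tg_zero, mul_zero, C_0, zero_mul, add_zero, zero_add,
      Nat.add_sub_cancel] at *
    linear_combination h1 + tT η θ τ q s (k + 1) 0 * key1'
  · have h2 := tT_rec η θ τ q s (k + 1) n
    simp only [Nat.add_sub_cancel] at *
    have key2 : tg η θ τ q s (k + 1) (n + 1)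
        + q ^ k * cCoef η τ q s (n + 1) * tb η θ τ q s (k + 1) n =
        tb η θ τ q s k (n + 1) * (q ^ k * cCoef η τ q s (n + 1)) + tg η θ τ q s k (n + 1) := by
      have e1 : k + 1 + (n + 1) - 1 = (k + 1) + n := by omega
      have e2 : k + (n + 1) - 1 = k + n := by omega
      rcases n with _ | n
      · simp only [tb, tg, e1, e2, aCoef, cCoef, Nat.add_sub_cancel, qnum_add' q k,
          qnum_add' q (k + 1), pow_succ q k, qpow_eq q k, qnum_succ', qnum_zero', Nat.sub_self, zero_add]
        ring
      · simp only [tb, tg, e1, e2, aCoef, cCoef, Nat.add_sub_cancel, qnum_add' q k,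
          qnum_add' q (k + 1), pow_succ q k, qpow_eq q k, qnum_succ', qnum_zero']
        ring
    have key3 : q ^ k * cCoef η τ q s (n + 1) * tg η θ τ q s (k + 1) n =
        tg η θ τ q s k (n + 1) * (q ^ k * cCoef η τ q s n) := by
      have e1 : k + 1 + n - 1 = k + n := by omega
      have e2 : k + (n + 1) - 1 = k + n := by omega
      simp only [tg, e1, e2]; ring
    have key2' := congrArg (C : ℝ → ℝ[X]) key2
    have key3' := congrArg (C : ℝ → ℝ[X]) key3
    rw [C_add, C_add, C_mul, C_mul (a := tb η θ τ q s k (n + 1))] at key2'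
    rw [C_mul, C_mul (a := tg η θ τ q s k (n + 1))] at key3'
    linear_combination h1 + C (q ^ k * cCoef η τ q s (n + 1)) * h2
      + tT η θ τ q s (k + 1) (n + 1) * key1' + tT η θ τ q s (k + 1) n * key2'
      + tT η θ τ q s (k + 1) (n - 1) * key3'

lemma tT_rel2 (η θ τ q s : ℝ) (k n : ℕ) : polyA η θ τ q s k * tT η θ τ q s (k + 1) n =
    C (q ^ k) * tT η θ τ q s k (n + 1) + C (aCoef η θ τ q (k + n)) * tT η θ τ q s k n := by
  have h1 := tT_rec η θ τ q s (k + 1) n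
  have r1 := tT_rel1 η θ τ q s k n
  have r2 := tT_rel1 η θ τ q s k (n + 1)
  have key : q ^ k * tb η θ τ q s (k + 1) n + (aCoef η θ τ q k - s * η * q ^ k * qnum q k) =
      q ^ k * (q ^ k * cCoef η τ q s (n + 1)) + aCoef η θ τ q (k + n) := by
    rcases n with _ | n
    · simp only [tb, aCoef, cCoef, Nat.add_sub_cancel, qnum_add' q k,
          qnum_add' q (k + 1), pow_succ q k, qpow_eq q k, qnum_succ', qnum_zero', Nat.sub_self, zero_add]
      ring
    · simp only [tb, aCoef, cCoef, Nat.add_sub_cancel, qnum_add' q k,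
          qnum_add' q (k + 1), pow_succ q k, qpow_eq q k, qnum_succ', qnum_zero']
      ring
  have key' := congrArg (C : ℝ → ℝ[X]) key
  rw [C_add, C_add, C_mul, C_mul] at key'
  have hg : tg η θ τ q s (k + 1) n = aCoef η θ τ q (k + n) * cCoef η τ q s n := by
    have e1 : k + 1 + n - 1 = k + n := by omega
    simp only [tg, e1]
  rw [hg, C_mul] at h1
  rw [C_mul] at r1
  simp only [Nat.add_sub_cancel] at r2
  rw [polyA, r1, r2]
  linear_combination C (q ^ k) * h1 + tT η θ τ q s (k + 1) n * key'

lemma qnum_nonneg {q : ℝ} (hq : 0 ≤ q) (n : ℕ) : 0 ≤ qnum q n :=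
  Finset.sum_nonneg fun i _ => pow_nonneg hq i

lemma qnum_succ_pos {q : ℝ} (hq : 0 ≤ q) (n : ℕ) : 0 < qnum q (n + 1) := by
  rw [qnum_succ']; have := mul_nonneg hq (qnum_nonneg hq n); linarith

lemma qfact_pos {q : ℝ} (hq : 0 ≤ q) (n : ℕ) : 0 < qfact q n :=
  Finset.prod_pos fun i _ => qnum_succ_pos hq i

lemma qfact_succ (q : ℝ) (n : ℕ) : qfact q (n + 1) = qfact q n * qnum q (n + 1) :=
  Finset.prod_range_succ _ _

/-- The q-binomial coefficient `[k+m choose k]`. -/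
noncomputable def qb (q : ℝ) (k m : ℕ) : ℝ := qfact q (k + m) / (qfact q k * qfact q m)

lemma qb_zero_left {q : ℝ} (hq : 0 ≤ q) (m : ℕ) : qb q 0 m = 1 := by
  have := (qfact_pos hq m).ne'
  have h0 : qfact q 0 = 1 := by simp [qfact]
  simp [qb, h0, this]

lemma qb_zero_right {q : ℝ} (hq : 0 ≤ q) (m : ℕ) : qb q m 0 = 1 := by
  have := (qfact_pos hq m).ne'
  have h0 : qfact q 0 = 1 := by simp [qfact]
  simp [qb, h0, this]

lemma qb_right {q : ℝ} (hq : 0 ≤ q) (k m : ℕ) :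
    qb q k (m + 1) * qnum q (m + 1) = qb q k m * qnum q (k + m + 1) := by
  have h1 := (qfact_pos hq k).ne'
  have h2 := (qfact_pos hq m).ne'
  have h3 := (qnum_succ_pos hq m).ne'
  simp only [qb, ← add_assoc, qfact_succ]
  field_simp

lemma qb_left {q : ℝ} (hq : 0 ≤ q) (k m : ℕ) :
    qb q (k + 1) m * qnum q (k + 1) = qb q k m * qnum q (k + m + 1) := by
  have h1 := (qfact_pos hq k).ne'
  have h2 := (qfact_pos hq m).ne'
  have h3 := (qnum_succ_pos hq k).ne'
  have e : k + 1 + m = k + m + 1 := by omega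
  simp only [qb, e, qfact_succ]
  field_simp

lemma qb_lr {q : ℝ} (hq : 0 ≤ q) (k m : ℕ) :
    qb q (k + 1) m * qnum q (k + 1) = qb q k (m + 1) * qnum q (m + 1) := by
  rw [qb_left hq, qb_right hq]

lemma qb_pascal {q : ℝ} (hq : 0 ≤ q) (k m : ℕ) :
    qb q (k + 1) (m + 1) = qb q k (m + 1) + q ^ (k + 1) * qb q (k + 1) m := by
  have h3 := (qnum_succ_pos hq m).ne'
  apply mul_right_cancel₀ h3
  rw [add_mul, qb_right hq, ← qb_lr hq]
  have e : k + 1 + m + 1 = (k + 1) + (m + 1) := by omega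
  rw [e, qnum_add' q (k + 1)]; ring

/-- Connection coefficients. -/
noncomputable def dc (η θ τ q s x : ℝ) (n k : ℕ) : ℝ :=
  if k ≤ n then qb q k (n - k) * (tT η θ τ q s k (n - k)).eval x else 0

/-- The death rates of the transition polynomials. -/
noncomputable def Cc (η τ q s t : ℝ) (k : ℕ) : ℝ :=
  η * (t - s * q ^ (k - 1) + τ * qnum q (k - 1)) * qnum q k

lemma dc_add (η θ τ q s x : ℝ) (k m : ℕ) :
    dc η θ τ q s x (k + m) k = qb q k m * (tT η θ τ q s k m).eval x := by
  simp [dc]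

lemma dc_zero (η θ τ q s x : ℝ) {n k : ℕ} (h : n < k) : dc η θ τ q s x n k = 0 := by
  rw [dc, if_neg (by omega)]

lemma polyA_eval (η θ τ q s x : ℝ) (k : ℕ) :
    (polyA η θ τ q s k).eval x = ACoef η θ τ q x s k := by
  simp [polyA, ACoef]; ring

lemma dc_rec0 (η θ τ s t x : ℝ) {q : ℝ} (hq : 0 ≤ q) (n : ℕ) :
    dc η θ τ q s x (n + 1) 0 =
      (ACoef η θ τ q x s 0 + Cc η τ q s t 0 - η⁻¹ - bCoef η θ τ q t n) * dc η θ τ q s x n 0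
      + ACoef η θ τ q x s 0 * Cc η τ q s t 1 * dc η θ τ q s x n 1
      - aCoef η θ τ q (n - 1) * cCoef η τ q t n * dc η θ τ q s x (n - 1) 0 := by
  have hd : ∀ m, dc η θ τ q s x m 0 = (tT η θ τ q s 0 m).eval x := by
    intro m
    have := dc_add η θ τ q s x 0 m
    rw [zero_add] at this
    rw [this, qb_zero_left hq, one_mul]
  simp only [hd]
  have r := congrArg (Polynomial.eval x) (tT_rec η θ τ q s 0 n)
  simp only [eval_mul, eval_add, eval_X, eval_C] at r
  rcases n with _ | n
  · rw [dc_zero _ _ _ _ _ _ (show 0 < 1 by omega)]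
    simp only [tT_zero, eval_one, cCoef_zero, ACoef, aCoef, Cc, bCoef, tb, tg, qnum_zero',
      pow_zero, mul_zero, zero_mul, mul_one, add_zero, zero_add, sub_zero] at r ⊢
    linear_combination -r
  · have h1 := dc_add η θ τ q s x 1 n
    have e : 1 + n = n + 1 := by omega
    rw [e] at h1
    have q1 := qb_left hq 0 n
    rw [qb_zero_left hq, one_mul, zero_add, zero_add] at q1
    have r2 := congrArg (Polynomial.eval x) (tT_rel2 η θ τ q s 0 n)
    simp only [eval_mul, eval_add, eval_C, polyA_eval, zero_add, pow_zero, one_mul] at r2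
    rw [h1]
    simp only [Nat.add_sub_cancel] at *
    have hC : Cc η τ q s t 1 = η * (t - s) * qnum q 1 := by simp [Cc, qnum_zero']
    have key1 : ACoef η θ τ q x s 0 + Cc η τ q s t 0 - η⁻¹ - bCoef η θ τ q t (n + 1)
        + η * (t - s) * qnum q (n + 1) = x - tb η θ τ q s 0 (n + 1) := by
      simp only [ACoef, aCoef, Cc, bCoef, tb, cCoef, Nat.add_sub_cancel, zero_add, pow_zero,
        qnum_zero', qnum_succ']
      ring
    have key2 : η * (t - s) * qnum q (n + 1) * aCoef η θ τ q n
        - aCoef η θ τ q n * cCoef η τ q t (n + 1) = - tg η θ τ q s 0 (n + 1) := by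
      simp only [tg, cCoef, Nat.add_sub_cancel, zero_add]
      ring
    rw [hC]
    linear_combination (-1) * r
      - (tT η θ τ q s 0 (n + 1)).eval x * key1 - (tT η θ τ q s 0 n).eval x * key2
      - η * (t - s) * ACoef η θ τ q x s 0 * (tT η θ τ q s 1 n).eval x * q1
      - η * (t - s) * qnum q (n + 1) * r2

lemma dc_rec (η θ τ s t x : ℝ) {q : ℝ} (hq : 0 ≤ q) (n k : ℕ) :
    dc η θ τ q s x (n + 1) (k + 1) = dc η θ τ q s x n k +
      (ACoef η θ τ q x s (k + 1) + Cc η τ q s t (k + 1) - η⁻¹ - bCoef η θ τ q t n)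
        * dc η θ τ q s x n (k + 1)
      + ACoef η θ τ q x s (k + 1) * Cc η τ q s t (k + 2) * dc η θ τ q s x n (k + 2)
      - aCoef η θ τ q (n - 1) * cCoef η τ q t n * dc η θ τ q s x (n - 1) (k + 1) := by
  rcases lt_trichotomy n k with h | h | h
  · rw [dc_zero _ _ _ _ _ _ (show n + 1 < k + 1 by omega),
      dc_zero _ _ _ _ _ _ (show n < k by omega), dc_zero _ _ _ _ _ _ (show n < k + 1 by omega),
      dc_zero _ _ _ _ _ _ (show n < k + 2 by omega),
      dc_zero _ _ _ _ _ _ (show n - 1 < k + 1 by omega)]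
    ring
  · subst h
    rw [dc_zero _ _ _ _ _ _ (show n < n + 1 by omega),
      dc_zero _ _ _ _ _ _ (show n < n + 2 by omega),
      dc_zero _ _ _ _ _ _ (show n - 1 < n + 1 by omega)]
    have h1 := dc_add η θ τ q s x n 0
    have h2 := dc_add η θ τ q s x (n + 1) 0
    rw [add_zero, qb_zero_right hq, tT_zero, eval_one] at h1 h2
    rw [h1, h2]; ring
  obtain ⟨m, rfl⟩ : ∃ m, n = k + 1 + m := ⟨n - (k + 1), by omega⟩
  have d1 := dc_add η θ τ q s x (k + 1) (m + 1)
  have d2 := dc_add η θ τ q s x k (m + 1)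
  have d3 := dc_add η θ τ q s x (k + 1) m
  have e2 : k + (m + 1) = k + 1 + m := by omega
  rw [e2] at d2
  rw [← add_assoc] at d1
  rw [d1, d2, d3, qb_pascal hq]
  have r := congrArg (Polynomial.eval x) (tT_rec η θ τ q s (k + 1) m)
  have r1 := congrArg (Polynomial.eval x) (tT_rel1 η θ τ q s k (m + 1))
  simp only [eval_mul, eval_add, eval_X, eval_C, Nat.add_sub_cancel] at r r1
  have ql := qb_lr hq k m
  rcases m with _ | m
  · rw [dc_zero _ _ _ _ _ _ (show k + 1 + 0 < k + 2 by omega),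
      dc_zero _ _ _ _ _ _ (show k + 1 + 0 - 1 < k + 1 by omega)]
    have key : qnum q (k + 1) * q ^ k * (η * s) + (ACoef η θ τ q x s (k + 1)
        + Cc η τ q s t (k + 1) - η⁻¹ - bCoef η θ τ q t (k + 1)) =
        q ^ (k + 1) * (x - tb η θ τ q s (k + 1) 0) := by
      simp only [ACoef, aCoef, Cc, bCoef, tb, cCoef, Nat.add_sub_cancel, add_zero,
        qnum_zero', pow_succ q k, qpow_eq q k, qnum_succ']
      ring
    have hc : cCoef η τ q s (0 + 1) = η * s * qnum q (0 + 1) := by simp [cCoef, qnum_zero']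
    rw [hc] at r1
    rw [tg_zero] at r
    simp only [add_zero] at *
    linear_combination (-q ^ (k + 1) * qb q (k + 1) 0) * r - qb q k (0 + 1) * r1
      - qb q (k + 1) 0 * (tT η θ τ q s (k + 1) 0).eval x * key
      + q ^ k * η * s * (tT η θ τ q s (k + 1) 0).eval x * ql
  · have d4 := dc_add η θ τ q s x (k + 2) m
    have d5 := dc_add η θ τ q s x (k + 1) m
    have e4 : k + 2 + m = k + 1 + (m + 1) := by omega
    have e5 : k + 1 + (m + 1) - 1 = k + 1 + m := by omega
    rw [e4] at d4
    rw [e5, d4, d5]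
    have ql2 := qb_lr hq (k + 1) m
    have qr2 := qb_right hq (k + 1) m
    have r2 := congrArg (Polynomial.eval x) (tT_rel2 η θ τ q s (k + 1) m)
    simp only [eval_mul, eval_add, eval_C, polyA_eval, Nat.add_sub_cancel] at r r2
    have hC : Cc η τ q s t (k + 2) = η * (t - s * q ^ (k + 1) + τ * qnum q (k + 1))
      * qnum q (k + 1 + 1) := rfl
    have hc : cCoef η τ q t (k + 1 + (m + 1)) = η * (t + τ * qnum q (k + 1 + m))
      * qnum q (k + 1 + m + 1) := rfl
    have hc1 : cCoef η τ q s (m + 1 + 1) = η * (s + τ * qnum q (m + 1)) * qnum q (m + 1 + 1) := rfl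
    rw [hc1] at r1
    have key : qnum q (k + 1) * q ^ k * (η * (s + τ * qnum q (m + 1)))
        + (ACoef η θ τ q x s (k + 1)
        + Cc η τ q s t (k + 1) - η⁻¹ - bCoef η θ τ q t (k + 1 + (m + 1)))
        + η * (t - s * q ^ (k + 1) + τ * qnum q (k + 1)) * qnum q (m + 1) * q ^ (k + 1) =
        q ^ (k + 1) * (x - tb η θ τ q s (k + 1) (m + 1)) := by
      simp only [ACoef, aCoef, Cc, bCoef, tb, cCoef, e5, Nat.add_sub_cancel,
        qnum_add' q (k + 1), pow_succ q k, qpow_eq q k, qnum_succ']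
      ring
    have key2 : η * (t - s * q ^ (k + 1) + τ * qnum q (k + 1)) * qnum q (m + 1)
        * aCoef η θ τ q (k + 1 + m) - aCoef η θ τ q (k + 1 + m) * (η * (t + τ * qnum q (k + 1 + m)))
        * qnum q (m + 1) = - q ^ (k + 1) * tg η θ τ q s (k + 1) (m + 1) := by
      simp only [tg, cCoef, e5, Nat.add_sub_cancel, qnum_add' q (k + 1)]
      ring
    rw [hC, hc]
    have e6 : k + 1 + 1 = k + 2 := rfl
    simp only [e6] at *
    linear_combination (-q ^ (k + 1) * qb q (k + 1) (m + 1)) * r - qb q k (m + 1 + 1) * r1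
      - qb q (k + 1) (m + 1) * (tT η θ τ q s (k + 1) (m + 1)).eval x * key
      + q ^ k * (η * (s + τ * qnum q (m + 1))) * (tT η θ τ q s (k + 1) (m + 1)).eval x * ql
      - ACoef η θ τ q x s (k + 1) * (η * (t - s * q ^ (k + 1) + τ * qnum q (k + 1)))
        * (tT η θ τ q s (k + 2) m).eval x * ql2
      - qb q (k + 1) (m + 1) * qnum q (m + 1) * (η * (t - s * q ^ (k + 1) + τ * qnum q (k + 1))) * r2
      - qb q (k + 1) (m + 1) * (tT η θ τ q s (k + 1) m).eval x * key2
      - aCoef η θ τ q (k + 1 + m) * (η * (t + τ * qnum q (k + 1 + m)))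
        * (tT η θ τ q s (k + 1) m).eval x * qr2

lemma connection_final (η θ τ s t x : ℝ) {q : ℝ} (hq : 0 ≤ q) (P Q : ℕ → ℝ[X])
    (hP0 : P 0 = 1) (hQ0 : Q 0 = 1)
    (hP : ∀ n, X * P n = P (n + 1) + C (bCoef η θ τ q t n) * P n
      + C (aCoef η θ τ q (n - 1) * cCoef η τ q t n) * P (n - 1))
    (hQ : ∀ n, X * Q n = Q (n + 1)
      + C (ACoef η θ τ q x s n + Cc η τ q s t n - η⁻¹) * Q n
      + C (ACoef η θ τ q x s (n - 1) * Cc η τ q s t n) * Q (n - 1)) (n : ℕ) :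
    P n = ∑ k ∈ Finset.range (n + 1), C (dc η θ τ q s x n k) * Q k := by
  refine (connection hP0 hQ0 hP hQ ?_ (dc η θ τ q s x) (fun n k h => dc_zero _ _ _ _ _ _ h) ?_ ?_ ?_
    n).1 (n + 1) (by omega)
  · simp [Cc, qnum_zero']
  · have := dc_add η θ τ q s x 0 0
    rw [zero_add] at this
    rw [this, qb_zero_left hq, tT_zero]; simp
  · intro n
    exact dc_rec0 η θ τ s t x hq n
  · intro n k
    exact dc_rec η θ τ s t x hq n k

/-- Integration of polynomials as a linear functional. -/
noncomputable def intL (μ : Measure ℝ) (h : ∀ p : ℝ[X], Integrable (fun x => p.eval x) μ) :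
    ℝ[X] →ₗ[ℝ] ℝ where
  toFun p := ∫ x, p.eval x ∂μ
  map_add' p r := by simp only [eval_add]; exact integral_add (h p) (h r)
  map_smul' a p := by simp only [eval_smul, smul_eq_mul, RingHom.id_apply]; exact integral_const_mul _ _

lemma intL_apply (μ : Measure ℝ) (h : ∀ p : ℝ[X], Integrable (fun x => p.eval x) μ) (p : ℝ[X]) :
    intL μ h p = ∫ x, p.eval x ∂μ := rfl

lemma int_eq_of_rec {b g : ℕ → ℝ} {P : ℕ → ℝ[X]} (hP0 : P 0 = 1)
    (hP : ∀ n, X * P n = P (n + 1) + C (b n) * P n + C (g n) * P (n - 1))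
    {μ ν : Measure ℝ} (hμ : ∀ p : ℝ[X], Integrable (fun x => p.eval x) μ)
    (hν : ∀ p : ℝ[X], Integrable (fun x => p.eval x) ν)
    (h : ∀ n, ∫ x, (P n).eval x ∂μ = ∫ x, (P n).eval x ∂ν) (p : ℝ[X]) :
    ∫ x, p.eval x ∂μ = ∫ x, p.eval x ∂ν := by
  have : intL μ hμ = intL ν hν := by
    refine LinearMap.ext_on (rec_induction hP0 hP) ?_
    rintro _ ⟨n, rfl⟩
    exact h n
  exact congrArg (fun f => f p) this

/-- The product of the first `m` polynomials `A_j`. -/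
noncomputable def polyG (η θ τ q s : ℝ) (m : ℕ) : ℝ[X] :=
  ∏ j ∈ Finset.range m, polyA η θ τ q s j

lemma orth_step (η θ τ q s : ℝ) (hq : 0 ≤ q) (ha : ∀ n, 0 ≤ aCoef η θ τ q n)
    (Λ : ℝ[X] →ₗ[ℝ] ℝ)
    (h1 : ∀ n j, j < n → Λ (tT η θ τ q s 0 n * tT η θ τ q s 0 j) = 0)
    (h2 : ∀ n, 0 ≤ Λ (tT η θ τ q s 0 n * tT η θ τ q s 0 n)) (m : ℕ) :
    (∀ n j, j < n → Λ (polyG η θ τ q s m * (tT η θ τ q s m n * tT η θ τ q s m j)) = 0) ∧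
    (∀ n, 0 ≤ Λ (polyG η θ τ q s m * (tT η θ τ q s m n * tT η θ τ q s m n))) := by
  induction m with
  | zero => simpa [polyG] using ⟨h1, h2⟩
  | succ m ih =>
    obtain ⟨i1, i2⟩ := ih
    set G := polyG η θ τ q s m with hG
    have hsm : ∀ (a : ℝ) (p : ℝ[X]), a * Λ p = Λ (C a * p) := by
      intro a p
      rw [C_mul', LinearMap.map_smul, smul_eq_mul]
    have hE : ∀ n j, Λ (G * (tT η θ τ q s m n * tT η θ τ q s (m + 1) j)) =
        Λ (G * (tT η θ τ q s m n * tT η θ τ q s m j)) - (q ^ m * cCoef η τ q s j) *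
          Λ (G * (tT η θ τ q s m n * tT η θ τ q s (m + 1) (j - 1))) := by
      intro n j
      rw [hsm, ← Λ.map_sub]
      congr 1
      linear_combination (-G * tT η θ τ q s m n) * tT_rel1 η θ τ q s m j
    have hE0 : ∀ n j, j < n → Λ (G * (tT η θ τ q s m n * tT η θ τ q s (m + 1) j)) = 0 := by
      intro n j
      induction j with
      | zero => intro h; rw [hE, i1 n 0 h, cCoef_zero]; simp
      | succ j ihj =>
        intro h
        rw [hE, i1 n _ h, Nat.add_sub_cancel, ihj (by omega)]; simp
    have hEn : ∀ n, Λ (G * (tT η θ τ q s m n * tT η θ τ q s (m + 1) n)) =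
        Λ (G * (tT η θ τ q s m n * tT η θ τ q s m n)) := by
      intro n
      rw [hE]
      rcases n with _ | n
      · rw [cCoef_zero]; simp
      · rw [hE0 _ _ (by omega)]; simp
    have hS : ∀ n j, Λ (polyG η θ τ q s (m + 1) *
        (tT η θ τ q s (m + 1) n * tT η θ τ q s (m + 1) j)) =
        q ^ m * Λ (G * (tT η θ τ q s m (n + 1) * tT η θ τ q s (m + 1) j)) +
        aCoef η θ τ q (m + n) * Λ (G * (tT η θ τ q s m n * tT η θ τ q s (m + 1) j)) := by
      intro n j
      rw [hsm, hsm, ← Λ.map_add]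
      congr 1
      rw [polyG, Finset.prod_range_succ, ← polyG, ← hG]
      linear_combination (G * tT η θ τ q s (m + 1) j) * tT_rel2 η θ τ q s m n
    constructor
    · intro n j h
      rw [hS, hE0 _ _ (by omega), hE0 _ _ h]; simp
    · intro n
      rw [hS, hE0 _ _ (by omega), hEn]
      have := mul_nonneg (ha (m + n)) (i2 n)
      linarith

lemma G_pos (η θ τ q s : ℝ) (hq : 0 ≤ q) (ha : ∀ n, 0 ≤ aCoef η θ τ q n)
    (Λ : ℝ[X] →ₗ[ℝ] ℝ)
    (h1 : ∀ n j, j < n → Λ (tT η θ τ q s 0 n * tT η θ τ q s 0 j) = 0)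
    (h2 : ∀ n, 0 ≤ Λ (tT η θ τ q s 0 n * tT η θ τ q s 0 n)) (m : ℕ) (p : ℝ[X]) :
    0 ≤ Λ (polyG η θ τ q s m * p ^ 2) := by
  obtain ⟨i1, i2⟩ := orth_step η θ τ q s hq ha Λ h1 h2 m
  have hp : p ∈ Submodule.span ℝ (Set.range (tT η θ τ q s m)) := by
    rw [rec_induction (tT_zero ..) (tT_rec η θ τ q s m)]; trivial
  rw [Finsupp.mem_span_range_iff_exists_finsupp] at hp
  obtain ⟨c, rfl⟩ := hp
  rw [Finsupp.sum, sq, Finset.sum_mul_sum, Finset.mul_sum, map_sum]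
  refine Finset.sum_nonneg fun i hi => ?_
  rw [Finset.mul_sum, map_sum]
  rw [Finset.sum_eq_single i]
  · rw [smul_mul_smul_comm, mul_smul_comm, Λ.map_smul, smul_eq_mul]
    exact mul_nonneg (mul_self_nonneg _) (i2 i)
  · intro j _ hj
    rw [smul_mul_smul_comm, mul_smul_comm, Λ.map_smul]
    rcases lt_or_gt_of_ne hj with h | h
    · rw [i1 _ _ h, smul_zero]
    · rw [mul_comm (tT η θ τ q s m i), i1 _ _ h, smul_zero]
  · intro h; exact absurd hi h

lemma support_nonneg {c : ℝ} {μ : Measure ℝ} [IsProbabilityMeasure μ] (h : HardyM c μ) (G : ℝ[X])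
    (hG : ∀ p : ℝ[X], 0 ≤ ∫ x, (G * p ^ 2).eval x ∂μ) (x : ℝ)
    (hx : ∀ U : Set ℝ, IsOpen U → x ∈ U → 0 < μ U) : 0 ≤ G.eval x := by
  by_contra hneg
  push Not at hneg
  let U : Set ℝ := {y | G.eval y < G.eval x / 2}
  have hU : IsOpen U := isOpen_lt (by fun_prop) continuous_const
  have hUm : MeasurableSet U := hU.measurableSet
  have hμU := hx U hU (by change G.eval x < G.eval x / 2; linarith)
  let g : ℝ → ℝ := U.indicator 1
  have hgm : Measurable g := measurable_one.indicator hUm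
  have hg : ∀ y, (y ∈ U ∧ g y = 1) ∨ (y ∉ U ∧ g y = 0) := by
    intro y
    by_cases hy : y ∈ U
    · left; exact ⟨hy, by simp [g, hy]⟩
    · right; exact ⟨hy, by simp [g, hy]⟩
  have hgi : ∀ p : ℝ[X], Integrable (fun y => g y * p.eval y) μ := by
    intro p
    refine ((h.memLp_poly p).indicator hUm).congr (Eventually.of_forall fun y => ?_)
    rcases hg y with ⟨a, b⟩ | ⟨a, b⟩ <;> simp [a, b]
  have hI : ∫ y, g y * G.eval y ∂μ < 0 := by
    have e : ∫ y, g y * G.eval y ∂μ = ∫ y in U, G.eval y ∂μ := by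
      rw [← integral_indicator hUm]
      refine integral_congr_ae (Eventually.of_forall fun y => ?_)
      rcases hg y with ⟨a, b⟩ | ⟨a, b⟩ <;> simp [a, b]
    rw [e]
    have : ∫ y in U, G.eval y ∂μ ≤ ∫ y in U, (G.eval x / 2) ∂μ :=
      setIntegral_mono_on (h.memLp_poly G).integrableOn (integrable_const _).integrableOn hUm
        fun y hy => le_of_lt hy
    rw [setIntegral_const, smul_eq_mul] at this
    have hr : 0 < μ.real U := ENNReal.toReal_pos hμU.ne' (measure_ne_top _ _)
    have := mul_neg_of_pos_of_neg hr (show G.eval x / 2 < 0 by linarith)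
    linarith
  set I := ∫ y, g y * G.eval y ∂μ with hIdef
  obtain ⟨p, hp⟩ := poly_dense_weight h hgm (B := 1) (by
    intro y; rcases hg y with ⟨a, b⟩ | ⟨a, b⟩ <;> simp [b]) (1 + G ^ 2)
    (fun y => by simp only [eval_add, eval_one, eval_pow]; positivity) (δ := -I / 2) (by linarith)
  have hi2 : Integrable (fun y => (1 + G ^ 2).eval y * (g y - p.eval y) ^ 2) μ := by
    have := ((hgi (1 + G ^ 2)).sub (hgi (2 * (1 + G ^ 2) * p))).add
      (h.memLp_poly ((1 + G ^ 2) * p ^ 2))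
    refine this.congr (Eventually.of_forall fun y => ?_)
    simp only [Pi.add_apply, Pi.sub_apply, eval_add, eval_mul, eval_one, eval_pow, eval_ofNat]
    rcases hg y with ⟨a, b⟩ | ⟨a, b⟩ <;> rw [b] <;> ring
  have hle : ∫ y, (G * p ^ 2).eval y ∂μ ≤
      ∫ y, (1 / 2 * (g y * G.eval y) + (1 + G ^ 2).eval y * (g y - p.eval y) ^ 2) ∂μ := by
    refine integral_mono (h.memLp_poly _) (((hgi G).const_mul _).add hi2) fun y => ?_
    simp only [eval_add, eval_mul, eval_one, eval_pow]
    rcases hg y with ⟨a, b⟩ | ⟨a, b⟩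
    · rw [b]
      have hn : G.eval y < 0 := lt_trans a (by linarith)
      have h3 : 0 ≤ (1 + G.eval y + G.eval y ^ 2) * (1 - p.eval y) ^ 2 :=
        mul_nonneg (by nlinarith [sq_nonneg (G.eval y + 1)]) (sq_nonneg _)
      nlinarith [mul_nonneg (neg_nonneg.2 hn.le) (sq_nonneg (2 * p.eval y - 1)),
        mul_nonneg (neg_nonneg.2 hn.le) (sq_nonneg (p.eval y))]
    · rw [b]
      have h3 : 0 ≤ (1 - G.eval y + G.eval y ^ 2) * (p.eval y) ^ 2 :=
        mul_nonneg (by nlinarith [sq_nonneg (G.eval y - 1)]) (sq_nonneg _)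
      nlinarith
  rw [integral_add ((hgi G).const_mul _) hi2, integral_const_mul, ← hIdef] at hle
  have := hG p
  linarith

lemma qnum_le {q : ℝ} (hq0 : 0 ≤ q) (hq1 : q ≤ 1) (n : ℕ) : qnum q n ≤ n := by
  have : qnum q n ≤ ∑ i ∈ Finset.range n, (1 : ℝ) :=
    Finset.sum_le_sum fun i _ => pow_le_one₀ hq0 hq1
  simpa using this

lemma aCoef_pos {η θ τ q : ℝ} (hq0 : 0 ≤ q) (hη : 0 < η) (hθ : 0 ≤ θ) (hτ : 0 ≤ τ) (n : ℕ) :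
    0 < aCoef η θ τ q n := by
  have := qnum_nonneg hq0 n
  unfold aCoef; positivity

lemma aCoef_le {η θ τ q : ℝ} (hq0 : 0 ≤ q) (hq1 : q ≤ 1) (hη : 0 < η) (hθ : 0 ≤ θ) (hτ : 0 ≤ τ)
    (n : ℕ) : aCoef η θ τ q n ≤ (η⁻¹ + θ + η * τ) * (n + 1) ^ 2 := by
  have h0 := qnum_nonneg hq0 n
  have h1 : qnum q n ≤ n + 1 := (qnum_le hq0 hq1 n).trans (by linarith)
  have hn : (1 : ℝ) ≤ (n : ℝ) + 1 := by linarith [(Nat.cast_nonneg n : (0:ℝ) ≤ n)]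
  have h2 : (1 : ℝ) ≤ ((n : ℝ) + 1) ^ 2 := one_le_pow₀ hn
  have h3 : (n : ℝ) + 1 ≤ ((n : ℝ) + 1) ^ 2 := by nlinarith
  have hi : 0 < η⁻¹ := by positivity
  unfold aCoef
  calc η⁻¹ + θ * qnum q n + (qnum q n) ^ 2 * η * τ
      ≤ η⁻¹ * (n + 1) ^ 2 + θ * (n + 1) ^ 2 + ((n : ℝ) + 1) ^ 2 * η * τ := by
        gcongr
        · nlinarith
        · linarith
    _ = _ := by ring

lemma cc_aux {η τ q u v : ℝ} (hq0 : 0 ≤ q) (hq1 : q ≤ 1) (hη : 0 < η) (hτ : 0 ≤ τ)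
    (hu : 0 ≤ u) (huv : u ≤ v) (n : ℕ) :
    0 ≤ η * (u + τ * qnum q (n - 1)) * qnum q n ∧
    η * (u + τ * qnum q (n - 1)) * qnum q n ≤ (η * v + η * τ) * (n + 1) ^ 2 := by
  have h0 := qnum_nonneg hq0 n
  have h0' := qnum_nonneg hq0 (n - 1)
  have h1 : qnum q n ≤ n + 1 := (qnum_le hq0 hq1 n).trans (by linarith)
  have h1' : qnum q (n - 1) ≤ n + 1 := (qnum_le hq0 hq1 (n - 1)).trans (by
    have : ((n - 1 : ℕ) : ℝ) ≤ n := Nat.cast_le.2 (Nat.sub_le _ _)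
    linarith)
  have hn : (1 : ℝ) ≤ (n : ℝ) + 1 := by linarith [(Nat.cast_nonneg n : (0:ℝ) ≤ n)]
  have hv : 0 ≤ v := hu.trans huv
  refine ⟨by positivity, ?_⟩
  calc η * (u + τ * qnum q (n - 1)) * qnum q n
      ≤ η * (v * (n + 1) + τ * (n + 1)) * (n + 1) := by
        gcongr
        nlinarith
    _ = _ := by ring

lemma truncated_rates {A l m : ℕ → ℝ} (hl : ∀ n, l n = if ∀ j ≤ n, 0 < A j then A n else 0)
    (hG : ∀ n, 0 ≤ ∏ j ∈ Finset.range n, A j) (n : ℕ) :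
    (∏ j ∈ Finset.range n, (√(l j) * √(m (j + 1)))) * (A n - l n) = 0 := by
  by_cases hall : ∀ j < n, 0 < A j
  · have hp : 0 < ∏ j ∈ Finset.range n, A j :=
      Finset.prod_pos fun j hj => hall j (Finset.mem_range.1 hj)
    have h1 := hG (n + 1)
    rw [Finset.prod_range_succ] at h1
    have hA : 0 ≤ A n := by
      by_contra h
      push Not at h
      have := mul_neg_of_pos_of_neg hp h
      linarith
    rw [hl n]
    split_ifs with h
    · simp
    · have : A n = 0 := by
        by_contra h'
        apply h
        intro j hj
        rcases hj.lt_or_eq with h2 | h2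
        · exact hall j h2
        · rw [h2]; exact lt_of_le_of_ne hA (Ne.symm h')
      simp [this]
  · push Not at hall
    obtain ⟨j, hj, hA⟩ := hall
    rw [Finset.prod_eq_zero (Finset.mem_range.2 hj), zero_mul]
    rw [hl j, if_neg (fun h => absurd (h j le_rfl) (not_lt.2 hA))]
    simp

theorem stmt19_aux (η θ τ q s t : ℝ)
    (hq0 : 0 ≤ q) (hq1 : q ≤ 1) (hη : 0 < η) (hθ : 0 ≤ θ) (hτ : 0 ≤ τ)
    (hs : 0 < s) (hst : s ≤ t)
    (pbar : ℝ → ℝ → ℕ → ℝ)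
    (hpbar0 : ∀ t' y : ℝ, pbar t' y 0 = 1)
    (hpbarrec : ∀ (t' y : ℝ) (n : ℕ), y * pbar t' y n =
      pbar t' y (n + 1) + bCoef η θ τ q t' n * pbar t' y n
        + aCoef η θ τ q (n - 1) * cCoef η τ q t' n * pbar t' y (n - 1))
    (μ : Measure ℝ)
    (hprob : IsProbabilityMeasure μ)
    (hmom : ∀ n : ℕ, Integrable (fun y : ℝ => |y| ^ n) μ)
    (horth : ∀ m n : ℕ, m ≠ n → ∫ y, pbar s y m * pbar s y n ∂μ = 0) :
    ∀ x : ℝ, (∀ U : Set ℝ, IsOpen U → x ∈ U → 0 < μ U) →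
      ∃! ν : Measure ℝ, IsProbabilityMeasure ν ∧
        (∀ n : ℕ, Integrable (fun y : ℝ => |y| ^ n) ν) ∧
        ∀ n : ℕ, pbar s x n = ∫ y, pbar t y n ∂ν := by
  intro x hx
  let P : ℝ → ℕ → ℝ[X] := fun t' => ttr (fun n => bCoef η θ τ q t' n)
    (fun n => aCoef η θ τ q (n - 1) * cCoef η τ q t' n)
  have hP0 : ∀ t', P t' 0 = 1 := fun t' => ttr_zero _ _
  have hP : ∀ t' n, X * P t' n = P t' (n + 1) + C (bCoef η θ τ q t' n) * P t' n
      + C (aCoef η θ τ q (n - 1) * cCoef η τ q t' n) * P t' (n - 1) :=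
    fun t' n => ttr_rec _ _ (by simp [cCoef_zero]) n
  have hpb : ∀ t' y n, pbar t' y n = (P t' n).eval y ∧
      pbar t' y (n - 1) = (P t' (n - 1)).eval y := by
    intro t' y n
    induction n with
    | zero => simp [hpbar0, hP0]
    | succ n ih =>
      refine ⟨?_, by simpa using ih.1⟩
      have h1 := hpbarrec t' y n
      have h2 := congrArg (Polynomial.eval y) (hP t' n)
      simp only [eval_mul, eval_add, eval_X, eval_C] at h2
      rw [ih.1, ih.2] at h1
      linear_combination h2 - h1
  have hpb' : ∀ t' y n, pbar t' y n = (P t' n).eval y := fun t' y n => (hpb t' y n).1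
  simp only [hpb'] at horth ⊢
  have hPT : P s = tT η θ τ q s 0 := by
    have e1 : (fun n => bCoef η θ τ q s n) = tb η θ τ q s 0 := by
      funext n
      simp only [bCoef, tb, cCoef, qnum_zero', zero_add, pow_zero]; ring
    have e2 : (fun n => aCoef η θ τ q (n - 1) * cCoef η τ q s n) = tg η θ τ q s 0 := by
      funext n
      simp only [tg, zero_add]
    simp only [P, e1, e2, tT]
  have ha := aCoef_pos hq0 hη hθ hτ
  have hμi := integrable_poly_of_mom hmom
  have hηi : 0 < η⁻¹ := by positivity
  have ht : 0 < t := hs.trans_le hst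
  -- Step 1 : `μ` is a Hardy measure
  have hμH : HardyM η⁻¹ μ := by
    obtain ⟨σ, hσp, hσH, hσ⟩ := favard η⁻¹ (aCoef η θ τ q) (cCoef η τ q s)
      (η⁻¹ + θ + η * τ + η * s) (by positivity) (fun n => (ha n).le)
      (fun n => (cc_aux hq0 hq1 hη hτ hs.le le_rfl n).1) (cCoef_zero ..)
      (fun n => (aCoef_le hq0 hq1 hη hθ hτ n).trans (by
        exact mul_le_mul_of_nonneg_right (by linarith [mul_pos hη hs]) (by positivity)))
      (fun n => (cc_aux hq0 hq1 hη hτ hs.le le_rfl n).2.trans (by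
        exact mul_le_mul_of_nonneg_right (by linarith) (by positivity)))
      (P s) (fun n => aCoef η θ τ q n + cCoef η τ q s n)
      (fun n => aCoef η θ τ q (n - 1) * cCoef η τ q s n) (hP0 s)
      (by
        intro n
        have e : aCoef η θ τ q n + cCoef η τ q s n - η⁻¹ = bCoef η θ τ q s n := by
          simp only [aCoef, bCoef, cCoef]; ring
        rw [e]; exact hP s n)
      (by simp [cCoef_zero]) (by intro n; simp) (by intro n; simp)
    have : μ = σ := by
      refine riesz_det hσH hmom (int_eq_of_rec (hP0 s) (hP s) hμi hσH.memLp_poly ?_)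
      intro n
      rcases n with _ | n
      · simp [hP0]
      · rw [hσ _ (by omega)]
        have := horth (n + 1) 0 (by omega)
        simpa [hP0] using this
    rw [this]; exact hσH
  -- Step 2 : positivity of the products of the rates
  have hGpos : ∀ n, 0 ≤ ∏ j ∈ Finset.range n, ACoef η θ τ q x s j := by
    intro n
    have := support_nonneg hμH (polyG η θ τ q s n) (fun p => by
      have := G_pos η θ τ q s hq0 (fun n => (ha n).le) (intL μ hμi) (by
        intro n j hj
        rw [intL_apply, ← hPT]
        simp only [eval_mul]
        exact horth n j (by omega)) (by
        intro n
        rw [intL_apply]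
        simp only [eval_mul]
        exact integral_nonneg fun y => mul_self_nonneg _) n p
      exact this) x hx
    rw [polyG, eval_prod] at this
    simpa only [polyA_eval] using this
  -- Step 3 : the transition measure
  classical
  let A : ℕ → ℝ := fun n => ACoef η θ τ q x s n
  let l : ℕ → ℝ := fun n => if ∀ j ≤ n, 0 < A j then A n else 0
  have hCc : ∀ n, 0 ≤ Cc η τ q s t n ∧ Cc η τ q s t n ≤ (η * t + η * τ) * (n + 1) ^ 2 := by
    intro n
    have hqn : q ^ (n - 1) ≤ 1 := pow_le_one₀ hq0 hq1
    have hqn0 : 0 ≤ q ^ (n - 1) := pow_nonneg hq0 _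
    exact cc_aux (u := t - s * q ^ (n - 1)) hq0 hq1 hη hτ (by nlinarith) (by nlinarith) n
  have hCc0 : Cc η τ q s t 0 = 0 := by simp [Cc, qnum_zero']
  let K := η⁻¹ + θ + η * τ + η * t + |x|
  have hK : 0 < K := by positivity
  have hl0 : ∀ n, 0 ≤ l n := by
    intro n
    simp only [l]
    split_ifs with h
    · exact (h n le_rfl).le
    · exact le_rfl
  have hlK : ∀ n : ℕ, l n ≤ K * (n + 1) ^ 2 := by
    intro n
    simp only [l]
    split_ifs with h
    · have h1 := aCoef_le hq0 hq1 hη hθ hτ n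
      have hqn : q ^ n ≤ 1 := pow_le_one₀ hq0 hq1
      have hqn0 : 0 ≤ q ^ n := pow_nonneg hq0 _
      have h2 : q ^ n * x ≤ |x| := by
        calc q ^ n * x ≤ q ^ n * |x| := by gcongr; exact le_abs_self x
          _ ≤ 1 * |x| := by gcongr
          _ = |x| := one_mul _
      have h3 : 0 ≤ s * η * q ^ n * qnum q n := by
        have := qnum_nonneg hq0 n
        positivity
      have hn : (1 : ℝ) ≤ ((n : ℝ) + 1) ^ 2 := one_le_pow₀ (by
        linarith [(Nat.cast_nonneg n : (0:ℝ) ≤ n)])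
      have h4 : |x| ≤ |x| * ((n : ℝ) + 1) ^ 2 := le_mul_of_one_le_right (abs_nonneg _) hn
      have h5 : 0 ≤ η * t * ((n : ℝ) + 1) ^ 2 := by positivity
      simp only [A, ACoef, K]
      linarith
    · positivity
  have hrates := truncated_rates (A := A) (l := l) (m := Cc η τ q s t) (fun n => by
    simp only [l]) hGpos
  let Q : ℕ → ℝ[X] := ttr (fun n => A n + Cc η τ q s t n - η⁻¹)
    (fun n => A (n - 1) * Cc η τ q s t n)
  have hQ0 : Q 0 = 1 := ttr_zero _ _
  have hQ : ∀ n, X * Q n = Q (n + 1) + C (A n + Cc η τ q s t n - η⁻¹) * Q n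
      + C (A (n - 1) * Cc η τ q s t n) * Q (n - 1) :=
    fun n => ttr_rec _ _ (by simp [hCc0]) n
  obtain ⟨ν, hνp, hνH, hν⟩ := favard η⁻¹ l (Cc η τ q s t) K hK hl0 (fun n => (hCc n).1) hCc0 hlK
    (fun n => (hCc n).2.trans (by
      exact mul_le_mul_of_nonneg_right (by simp only [K]; linarith [abs_nonneg x])
        (by positivity)))
    Q (fun n => A n + Cc η τ q s t n) (fun n => A (n - 1) * Cc η τ q s t n) hQ0 hQ
    (by simp [hCc0])
    (by intro n; linear_combination hrates n)
    (by
      intro n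
      simp only [Nat.add_sub_cancel]
      linear_combination Cc η τ q s t (n + 1) * hrates n)
  have hval : ∀ n, (P s n).eval x = ∫ y, (P t n).eval y ∂ν := by
    intro n
    have hc := connection_final η θ τ s t x hq0 (P t) Q (hP0 t) hQ0 (hP t) hQ n
    rw [← intL_apply ν hνH.memLp_poly, hc, map_sum, Finset.sum_eq_single 0]
    · rw [C_mul', LinearMap.map_smul, intL_apply, hQ0, hPT]
      have := dc_add η θ τ q s x 0 n
      rw [zero_add, qb_zero_left hq0, one_mul] at this
      simp [this]
    · intro k _ hk
      rw [C_mul', LinearMap.map_smul, intL_apply, hν k (by omega), smul_zero]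
    · intro h; simp at h
  refine ⟨ν, ⟨hνp, hνH.mom, hval⟩, ?_⟩
  rintro ρ ⟨hρp, hρm, hρ⟩
  refine riesz_det hνH hρm (int_eq_of_rec (hP0 t) (hP t) (integrable_poly_of_mom hρm)
    hνH.memLp_poly fun n => ?_)
  rw [← hρ n, hval n]

end Helpers

/-- main projection formula: let `0 ≤ q ≤ 1`, `η > 0`, `θ ≥ 0`, `τ ≥ 0` and
`0 < s ≤ t`.  If `μ_s` is an orthogonality measure of the monic polynomials `{p̄_n(·;s)}`
(a probability measure with finite moments of all orders), then for every `x` in the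
topological support of `μ_s` there is a unique probability measure `ν_x` on `ℝ` with finite
moments of all orders such that `p̄_n(x;s) = ∫ p̄_n(y;t) ν_x(dy)` for all `n ≥ 0`.
Here `pbar t y n` denotes `p̄_n(y;t)`. -/
theorem stmt19 (η θ τ q s t : ℝ)
    (hq0 : 0 ≤ q) (hq1 : q ≤ 1) (hη : 0 < η) (hθ : 0 ≤ θ) (hτ : 0 ≤ τ)
    (hs : 0 < s) (hst : s ≤ t)
    (pbar : ℝ → ℝ → ℕ → ℝ)
    (hpbar0 : ∀ t' y : ℝ, pbar t' y 0 = 1)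
    (hpbarrec : ∀ (t' y : ℝ) (n : ℕ), y * pbar t' y n =
      pbar t' y (n + 1) + bCoef η θ τ q t' n * pbar t' y n
        + aCoef η θ τ q (n - 1) * cCoef η τ q t' n * pbar t' y (n - 1))
    (μ : Measure ℝ)
    (hprob : IsProbabilityMeasure μ)
    (hmom : ∀ n : ℕ, Integrable (fun y : ℝ => |y| ^ n) μ)
    (horth : ∀ m n : ℕ, m ≠ n → ∫ y, pbar s y m * pbar s y n ∂μ = 0) :
    ∀ x : ℝ, (∀ U : Set ℝ, IsOpen U → x ∈ U → 0 < μ U) →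
      ∃! ν : Measure ℝ, IsProbabilityMeasure ν ∧
        (∀ n : ℕ, Integrable (fun y : ℝ => |y| ^ n) ν) ∧
        ∀ n : ℕ, pbar s x n = ∫ y, pbar t y n ∂ν := 
  stmt19_aux η θ τ q s t hq0 hq1 hη hθ hτ hs hst pbar hpbar0 hpbarrec μ hprob hmom horth
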